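/- arXiv:1911.02806 — 12 statements merged into one kernel-verified Lean document; each statement's English description precedes it below -/
import Mathlib

section
/- For every δ > 0, the QR mixed problem admits exactly one solution: there exists a unique pair (E_δ, F_δ) ∈ (U + V₀) × M such that δ⟨E_δ, φ⟩_H + conj(a(φ, F_δ)) = 0 for all φ ∈ V₀ and a(E_δ, ψ) − ⟨F_δ, ψ⟩_H = ℓ(ψ) for all ψ ∈ M. (Abstract form of the well-posedness part of Theorem 3.2.) -/
open ComplexConjugate

local notation "⟪" x ", " y "⟫" => @inner ℂ _ _ x y

theorem qr_unit {V N : Type*} [NormedAddCommGroup V] [InnerProductSpace ℂ V] [CompleteSpace V]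
    [NormedAddCommGroup N] [InnerProductSpace ℂ N] [CompleteSpace N]
    (S : V →L[ℂ] N) (δ : ℝ) (hδ : 0 < δ) (g : V) :
    ∃ v : V, (δ : ℂ) • v + S.adjoint (S v) = g := by
  let A : V →L[ℂ] V := (δ : ℂ) • ContinuousLinearMap.id ℂ V + S.adjoint.comp S
  have hA : IsUnit A := by
    refine ContinuousLinearMap.isUnit_of_forall_le_norm_inner_map A (c := ⟨δ, hδ.le⟩) hδ ?_
    intro x
    have h : ⟪A x, x⟫ = ((δ * ‖x‖ ^ 2 + ‖S x‖ ^ 2 : ℝ) : ℂ) := by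
      simp [A, inner_add_left, inner_smul_left, ContinuousLinearMap.adjoint_inner_left,
        inner_self_eq_norm_sq_to_K]
    rw [h, Complex.norm_real, Real.norm_eq_abs]
    refine le_trans ?_ (le_abs_self _)
    change ‖x‖ ^ 2 * δ ≤ _
    nlinarith [sq_nonneg ‖S x‖]
  obtain ⟨B, hB⟩ := hA.exists_right_inv
  exact ⟨B g, by simpa [A] using congrArg (fun f : V →L[ℂ] V => f g) hB⟩

/-- for every `δ > 0` the QR mixed problem admits exactly one solution
`(E_δ, F_δ) ∈ (U + V₀) × M`. -/
theorem qr_mixed_problem_wellposed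
    {H : Type*} [NormedAddCommGroup H] [InnerProductSpace ℂ H] [CompleteSpace H]
    (V₀ M : Submodule ℂ H)
    (hV₀ : IsClosed (V₀ : Set H)) (hM : IsClosed (M : Set H))
    (a : H → H → ℂ)
    (ha_lin : ∀ (c : ℂ) (u u' v : H), v ∈ M → a (c • u + u') v = c * a u v + a u' v)
    (ha_conj : ∀ (c : ℂ) (u v v' : H), v ∈ M → v' ∈ M →
      a u (c • v + v') = conj c * a u v + a u v')
    (ha_bdd : ∃ C : ℝ, ∀ (u v : H), v ∈ M → ‖a u v‖ ≤ C * ‖u‖ * ‖v‖)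
    (ℓ : H → ℂ)
    (hℓ_conj : ∀ (c : ℂ) (v w : H), v ∈ M → w ∈ M → ℓ (c • v + w) = conj c * ℓ v + ℓ w)
    (hℓ_bdd : ∃ C : ℝ, ∀ v ∈ M, ‖ℓ v‖ ≤ C * ‖v‖)
    (U : H) (δ : ℝ) (hδ : 0 < δ) :
    ∃! p : H × H, (p.1 - U ∈ V₀ ∧ p.2 ∈ M) ∧
      (∀ φ ∈ V₀, (δ : ℂ) * ⟪φ, p.1⟫ + conj (a φ p.2) = 0) ∧
      (∀ ψ ∈ M, a p.1 ψ - ⟪ψ, p.2⟫ = ℓ ψ) := by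
  have : CompleteSpace V₀ := hV₀.completeSpace_coe
  have : CompleteSpace M := hM.completeSpace_coe
  have a0 : ∀ v ∈ M, a 0 v = 0 := fun v hv => by simpa using ha_lin 1 0 0 v hv
  have a0' : ∀ u, a u 0 = 0 := fun u => by simpa using ha_conj 1 u 0 0 M.zero_mem M.zero_mem
  have l0 : ℓ 0 = 0 := by simpa using hℓ_conj 1 0 0 M.zero_mem M.zero_mem
  obtain ⟨C, hC⟩ := ha_bdd
  obtain ⟨D, hD⟩ := hℓ_bdd
  -- Riesz representation of `ℓ`
  obtain ⟨L, hL⟩ : ∃ L : M, ∀ ψ : M, ⟪ψ, L⟫ = ℓ ψ := by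
    let f : M →ₗ[ℂ] ℂ :=
      { toFun := fun ψ => conj (ℓ ψ)
        map_add' := fun x y => by
          simpa using congrArg conj (hℓ_conj 1 x y x.2 y.2)
        map_smul' := fun c x => by
          simpa [l0] using congrArg conj (hℓ_conj c x 0 x.2 M.zero_mem) }
    let f' : M →L[ℂ] ℂ := f.mkContinuous D (fun x => by simpa [f] using hD x x.2)
    refine ⟨(InnerProductSpace.toDual ℂ M).symm f', fun ψ => ?_⟩
    rw [← inner_conj_symm, InnerProductSpace.toDual_symm_apply]
    simp [f', f]
  -- Riesz representation of `a`
  obtain ⟨T, hT⟩ : ∃ T : H →L[ℂ] M, ∀ (u : H) (ψ : M), ⟪ψ, T u⟫ = a u ψ := by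
    let B : H →ₛₗ[starRingEnd ℂ] M →ₗ[ℂ] ℂ :=
      LinearMap.mk₂'ₛₗ (starRingEnd ℂ) (RingHom.id ℂ) (fun u ψ => conj (a u ψ))
        (fun u u' v => by simpa using congrArg conj (ha_lin 1 u u' v v.2))
        (fun c u v => by simpa [a0 v v.2] using congrArg conj (ha_lin c u 0 v v.2))
        (fun u v v' => by simpa using congrArg conj (ha_conj 1 u v v' v.2 v'.2))
        (fun c u v => by simpa [a0'] using congrArg conj (ha_conj c u v 0 v.2 M.zero_mem))
    let B' : H →L⋆[ℂ] M →L[ℂ] ℂ := B.mkContinuous₂ C (fun x y => by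
      simpa [B] using hC x y y.2)
    refine ⟨((InnerProductSpace.toDual ℂ M).symm.toContinuousLinearEquiv.toContinuousLinearMap).comp
      B', fun u ψ => ?_⟩
    rw [← inner_conj_symm]
    change conj ⟪(InnerProductSpace.toDual ℂ M).symm (B' u), ψ⟫ = _
    rw [InnerProductSpace.toDual_symm_apply]
    simp [B', B]
  have hT' : ∀ (u : H) (F : M), conj (a u F) = ⟪T u, F⟫ := fun u F => by
    rw [← hT, inner_conj_symm]
  let S : V₀ →L[ℂ] M := T.comp V₀.subtypeL
  have hF : ∀ (E : H) (F : M), (∀ ψ ∈ M, a E ψ - ⟪ψ, (F : H)⟫ = ℓ ψ) ↔ F = T E - L := by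
    intro E F
    constructor
    · intro h
      refine ext_inner_left ℂ fun ψ => ?_
      rw [inner_sub_right, hT, hL, ← h ψ ψ.2, Submodule.coe_inner]
      ring
    · rintro rfl ψ hψ
      have h1 := hT E ⟨ψ, hψ⟩
      have h2 := hL ⟨ψ, hψ⟩
      rw [Submodule.coe_inner] at h1 h2
      simp only at h1 h2
      rw [Submodule.coe_sub, inner_sub_right, h1, h2]
      ring
  obtain ⟨g, hg⟩ : ∃ g : V₀, ∀ φ : V₀, ⟪φ, g⟫ = -((δ : ℂ) * ⟪(φ : H), U⟫ + ⟪T φ, T U - L⟫) := by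
    refine ⟨-((δ : ℂ) • V₀.orthogonalProjectionOnto U + S.adjoint (T U - L)), fun φ => ?_⟩
    rw [inner_neg_right, inner_add_right, inner_smul_right,
      ContinuousLinearMap.adjoint_inner_right, Submodule.inner_orthogonalProjectionOnto_eq_of_mem_left]
    rfl
  obtain ⟨v, hv⟩ := qr_unit S δ hδ g
  refine ⟨(U + v, ((T (U + v) - L : M) : H)), ⟨⟨by simp, (T (U + v) - L : M).2⟩, ?_,
    (hF _ _).2 rfl⟩, ?_⟩
  · intro φ hφ
    have h := hg ⟨φ, hφ⟩
    rw [← hv, inner_add_right, inner_smul_right, ContinuousLinearMap.adjoint_inner_right,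
      Submodule.coe_inner] at h
    have hS : ⟪S ⟨φ, hφ⟩, S v⟫ = ⟪T φ, T v⟫ := rfl
    rw [hS] at h
    simp only at h ⊢
    rw [hT', map_add, add_sub_right_comm, inner_add_right, inner_add_right]
    linear_combination h
  · rintro ⟨E, F⟩ ⟨⟨hE, hFM⟩, h1, h2⟩
    simp only at hE hFM h1 h2
    have hFe := (hF E ⟨F, hFM⟩).1 h2
    have hFe' : F = ((T E - L : M) : H) := congrArg Subtype.val hFe
    subst hFe'
    have hw : E - (U + v) ∈ V₀ := by
      rw [← sub_sub]; exact V₀.sub_mem hE v.2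
    set w := E - (U + v) with hwdef
    have e1 := h1 w hw
    have e2 := hg ⟨w, hw⟩
    rw [← hv, inner_add_right, inner_smul_right, ContinuousLinearMap.adjoint_inner_right,
      Submodule.coe_inner] at e2
    have hS : ⟪S ⟨w, hw⟩, S v⟫ = ⟪T w, T v⟫ := rfl
    rw [hS] at e2
    simp only at e2
    have hEe : E = U + v + w := by rw [hwdef]; abel
    rw [hT', hEe] at e1
    have : T (U + v + w) - L = (T U - L) + T v + T w := by
      rw [map_add, map_add]; abel
    rw [this] at e1
    simp only [inner_add_right] at e1
    have e3 : (δ : ℂ) * ⟪w, w⟫ + ⟪T w, T w⟫ = 0 := by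
      linear_combination e1 - e2
    rw [inner_self_eq_norm_sq_to_K, inner_self_eq_norm_sq_to_K] at e3
    have e4 : δ * ‖w‖ ^ 2 + ‖T w‖ ^ 2 = 0 := by
      apply Complex.ofReal_injective
      push_cast
      exact e3
    have e5 : ‖w‖ ^ 2 = 0 := by
      by_contra hne
      have : 0 < ‖w‖ ^ 2 := lt_of_le_of_ne (sq_nonneg _) (Ne.symm hne)
      nlinarith [mul_pos hδ this, sq_nonneg ‖T w‖]
    have e6 : w = 0 := by simpa using e5
    have e7 : E = U + v := by rw [hEe, e6, add_zero]
    rw [e7]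
end

section
/- Suppose E ∈ U + V₀ satisfies a(E, ψ) = ℓ(ψ) for all ψ ∈ M, and let (E_δ, F_δ) ∈ (U + V₀) × M be a solution of the QR mixed problem for some δ > 0. Then the orthogonality relation δ⟨E_δ, E_δ − E⟩_H + ‖F_δ‖_H² = 0 holds, and consequently ‖E_δ‖_H ≤ ‖E‖_H and ‖F_δ‖_H ≤ √δ · ‖E‖_H. -/
open ComplexConjugate

local notation "⟪" x ", " y "⟫" => @inner ℂ _ _ x y

/-- orthogonality relation `δ⟨E_δ, E_δ − E⟩_H + ‖F_δ‖² = 0` and the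
resulting estimates `‖E_δ‖ ≤ ‖E‖` and `‖F_δ‖ ≤ √δ ‖E‖`.
(Paper inner products `⟨u,φ⟩` are linear in the first argument, hence written as
`⟪φ, u⟫` in Mathlib's convention.) -/
theorem qr_orthogonality_and_estimates
    {H : Type*} [NormedAddCommGroup H] [InnerProductSpace ℂ H] [CompleteSpace H]
    (V₀ M : Submodule ℂ H)
    (hV₀ : IsClosed (V₀ : Set H)) (hM : IsClosed (M : Set H))
    (a : H → H → ℂ)
    (ha_lin : ∀ (c : ℂ) (u u' v : H), v ∈ M → a (c • u + u') v = c * a u v + a u' v)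
    (ha_conj : ∀ (c : ℂ) (u v v' : H), v ∈ M → v' ∈ M →
      a u (c • v + v') = conj c * a u v + a u v')
    (ha_bdd : ∃ C : ℝ, ∀ (u v : H), v ∈ M → ‖a u v‖ ≤ C * ‖u‖ * ‖v‖)
    (ℓ : H → ℂ)
    (hℓ_conj : ∀ (c : ℂ) (v w : H), v ∈ M → w ∈ M → ℓ (c • v + w) = conj c * ℓ v + ℓ w)
    (hℓ_bdd : ∃ C : ℝ, ∀ v ∈ M, ‖ℓ v‖ ≤ C * ‖v‖)
    (U : H) (δ : ℝ) (hδ : 0 < δ)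
    (E : H) (hE_mem : E - U ∈ V₀) (hE_eq : ∀ ψ ∈ M, a E ψ = ℓ ψ)
    (Eδ Fδ : H) (hEδ_mem : Eδ - U ∈ V₀) (hFδ_mem : Fδ ∈ M)
    (h_eq1 : ∀ φ ∈ V₀, (δ : ℂ) * ⟪φ, Eδ⟫ + conj (a φ Fδ) = 0)
    (h_eq2 : ∀ ψ ∈ M, a Eδ ψ - ⟪ψ, Fδ⟫ = ℓ ψ) :
    (δ : ℂ) * ⟪Eδ - E, Eδ⟫ + ((‖Fδ‖ ^ 2 : ℝ) : ℂ) = 0 ∧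
    ‖Eδ‖ ≤ ‖E‖ ∧
    ‖Fδ‖ ≤ Real.sqrt δ * ‖E‖ := by
  have hmem : Eδ - E ∈ V₀ := by
    have h := V₀.sub_mem hEδ_mem hE_mem
    rwa [sub_sub_sub_cancel_right] at h
  have hA : a (Eδ - E) Fδ = ((‖Fδ‖ ^ 2 : ℝ) : ℂ) := by
    have h1 := ha_lin (-1) E Eδ Fδ hFδ_mem
    have h2 : (-1 : ℂ) • E + Eδ = Eδ - E := by
      rw [neg_one_smul]; abel
    have h3 := hE_eq Fδ hFδ_mem
    have h4 := h_eq2 Fδ hFδ_mem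
    have h5 : ⟪Fδ, Fδ⟫ = ((‖Fδ‖ ^ 2 : ℝ) : ℂ) := by
      rw [inner_self_eq_norm_sq_to_K]; push_cast; rfl
    rw [h2] at h1
    rw [h1, h3, ← h5]
    linear_combination h4
  have horth : (δ : ℂ) * ⟪Eδ - E, Eδ⟫ + ((‖Fδ‖ ^ 2 : ℝ) : ℂ) = 0 := by
    have h := h_eq1 _ hmem
    rwa [hA, Complex.conj_ofReal] at h
  have hre : δ * (‖Eδ‖ ^ 2 - (⟪E, Eδ⟫).re) + ‖Fδ‖ ^ 2 = 0 := by
    have h := congrArg Complex.re horth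
    have h5 : (⟪Eδ, Eδ⟫).re = ‖Eδ‖ ^ 2 := inner_self_eq_norm_sq (𝕜 := ℂ) Eδ
    rw [inner_sub_left, Complex.add_re, Complex.re_ofReal_mul, Complex.sub_re, h5,
      Complex.ofReal_re, Complex.zero_re] at h
    exact h
  have hcs : (⟪E, Eδ⟫).re ≤ ‖E‖ * ‖Eδ‖ := re_inner_le_norm (𝕜 := ℂ) E Eδ
  have hx := norm_nonneg Eδ
  have he := norm_nonneg E
  have hle : ‖Eδ‖ ≤ ‖E‖ := by
    by_contra! hlt
    have h1 : 0 < ‖Eδ‖ ^ 2 - (⟪E, Eδ⟫).re := by nlinarith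
    have := mul_pos hδ h1
    nlinarith [sq_nonneg ‖Fδ‖]
  refine ⟨horth, hle, ?_⟩
  refine abs_le_of_sq_le_sq' ?_ (by positivity) |>.2
  rw [mul_pow, Real.sq_sqrt hδ.le]
  have h1 : (⟪E, Eδ⟫).re - ‖Eδ‖ ^ 2 ≤ ‖E‖ ^ 2 := by nlinarith
  have := mul_le_mul_of_nonneg_left h1 hδ.le
  linarith
end

section
/- Suppose E is the unique element of U + V₀ satisfying a(E, ψ) = ℓ(ψ) for all ψ ∈ M (i.e. any Ẽ ∈ U + V₀ with a(Ẽ, ψ) = ℓ(ψ) for all ψ ∈ M equals E). For each δ > 0 let (E_δ, F_δ) denote the unique solution of the QR mixed problem. Then for every sequence (δ_n) of positive reals with δ_n → 0, one has E_{δ_n} → E and F_{δ_n} → 0 in the norm of H. (Abstract form of the convergence part of Theorem 3.2.) -/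
open ComplexConjugate Filter Topology

local notation "⟪" x ", " y "⟫" => @inner ℂ _ _ x y

theorem qr_weak_aux {H : Type*} [NormedAddCommGroup H] [InnerProductSpace ℂ H] [CompleteSpace H]
    (e : ℕ → H) (B : ℝ) (hB : ∀ n, ‖e n‖ ≤ B)
    (hS : ∀ x : H, (∀ w : H, Tendsto (fun n => ⟪w, e n⟫) atTop (𝓝 0) → ⟪w, x⟫ = 0) → x = 0)
    (w : H) : Tendsto (fun n => ⟪w, e n⟫) atTop (𝓝 0) := by
  let S : Submodule ℂ H :=
    { carrier := {w | Tendsto (fun n => ⟪w, e n⟫) atTop (𝓝 0)}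
      add_mem' := by
        intro x y hx hy
        have := Tendsto.add hx hy
        simpa [inner_add_left] using this
      zero_mem' := by simp
      smul_mem' := by
        intro c x hx
        have := Tendsto.const_mul (conj c) hx
        simpa [inner_smul_left, mul_comm] using this }
  have hd : S.topologicalClosure = ⊤ := by
    rw [Submodule.topologicalClosure_eq_top_iff, Submodule.eq_bot_iff]
    intro x hx
    exact hS x fun w hw => (Submodule.mem_orthogonal S x).1 hx w hw
  have hw : w ∈ closure (S : Set H) := by
    rw [← Submodule.topologicalClosure_coe, hd]; trivial
  have hB0 : 0 ≤ B := (norm_nonneg _).trans (hB 0)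
  rw [Metric.tendsto_atTop]
  intro ε hε
  obtain ⟨w', hw', hd'⟩ := Metric.mem_closure_iff.1 hw (ε / (2 * (B + 1))) (by positivity)
  obtain ⟨N, hN⟩ := Metric.tendsto_atTop.1 (show Tendsto (fun n => ⟪w', e n⟫) atTop (𝓝 0) from hw')
    (ε / 2) (by positivity)
  refine ⟨N, fun n hn => ?_⟩
  have h1 := hN n hn
  rw [dist_zero_right] at h1 ⊢
  have h2 : ⟪w, e n⟫ = ⟪w - w', e n⟫ + ⟪w', e n⟫ := by rw [inner_sub_left]; ring
  have h3 : ‖⟪w - w', e n⟫‖ ≤ ε / 2 := by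
    calc ‖⟪w - w', e n⟫‖ ≤ ‖w - w'‖ * ‖e n‖ := norm_inner_le_norm _ _
      _ ≤ (ε / (2 * (B + 1))) * (B + 1) := by
        rw [dist_eq_norm] at hd'
        gcongr
        linarith [hB n]
      _ = ε / 2 := by field_simp
  rw [h2]
  linarith [norm_add_le ⟪w - w', e n⟫ ⟪w', e n⟫]

/-- convergence of the QR method. If `E` is the unique element of `U + V₀`
with `a(E,ψ) = ℓ(ψ)` for all `ψ ∈ M`, and `(E_δ, F_δ)` is the solution of the QR mixed
problem for each `δ > 0`, then `E_{δₙ} → E` and `F_{δₙ} → 0` in `H` for any positive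
sequence `δₙ → 0`. -/
theorem qr_convergence
    {H : Type*} [NormedAddCommGroup H] [InnerProductSpace ℂ H] [CompleteSpace H]
    (V₀ M : Submodule ℂ H)
    (hV₀ : IsClosed (V₀ : Set H)) (hM : IsClosed (M : Set H))
    (a : H → H → ℂ)
    (ha_lin : ∀ (c : ℂ) (u u' v : H), v ∈ M → a (c • u + u') v = c * a u v + a u' v)
    (ha_conj : ∀ (c : ℂ) (u v v' : H), v ∈ M → v' ∈ M →
      a u (c • v + v') = conj c * a u v + a u v')
    (ha_bdd : ∃ C : ℝ, ∀ (u v : H), v ∈ M → ‖a u v‖ ≤ C * ‖u‖ * ‖v‖)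
    (ℓ : H → ℂ)
    (hℓ_conj : ∀ (c : ℂ) (v w : H), v ∈ M → w ∈ M → ℓ (c • v + w) = conj c * ℓ v + ℓ w)
    (hℓ_bdd : ∃ C : ℝ, ∀ v ∈ M, ‖ℓ v‖ ≤ C * ‖v‖)
    (U E : H)
    (hE_mem : E - U ∈ V₀)
    (hE_eq : ∀ ψ ∈ M, a E ψ = ℓ ψ)
    (hE_unique : ∀ E' : H, E' - U ∈ V₀ → (∀ ψ ∈ M, a E' ψ = ℓ ψ) → E' = E)
    (sol : ℝ → H × H)
    (hsol : ∀ δ : ℝ, 0 < δ →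
      ((sol δ).1 - U ∈ V₀ ∧ (sol δ).2 ∈ M) ∧
      (∀ φ ∈ V₀, (δ : ℂ) * ⟪φ, (sol δ).1⟫ + conj (a φ (sol δ).2) = 0) ∧
      (∀ ψ ∈ M, a (sol δ).1 ψ - ⟪ψ, (sol δ).2⟫ = ℓ ψ))
    (δn : ℕ → ℝ) (hδn_pos : ∀ n, 0 < δn n)
    (hδn_lim : Tendsto δn atTop (𝓝 0)) :
    Tendsto (fun n => (sol (δn n)).1) atTop (𝓝 E) ∧
    Tendsto (fun n => (sol (δn n)).2) atTop (𝓝 (0 : H)) := by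
  obtain ⟨C, hC⟩ := ha_bdd
  have ha_zero : ∀ v ∈ M, a 0 v = 0 := by
    intro v hv
    have := ha_lin 1 0 0 v hv
    simpa using this
  have ha_add : ∀ u u' v, v ∈ M → a (u + u') v = a u v + a u' v := by
    intro u u' v hv
    have := ha_lin 1 u u' v hv
    simpa using this
  have ha_sub : ∀ u u' v, v ∈ M → a (u - u') v = a u v - a u' v := by
    intro u u' v hv
    have := ha_add (u - u') u' v hv
    rw [sub_add_cancel] at this
    rw [this]; ring
  have hriesz : ∀ v ∈ M, ∃ w : H, ∀ u, a u v = ⟪w, u⟫ := by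
    intro v hv
    let f : H →ₗ[ℂ] ℂ :=
      { toFun := fun u => a u v
        map_add' := fun u u' => ha_add u u' v hv
        map_smul' := fun c u => by
          have := ha_lin c u 0 v hv
          simpa [ha_zero v hv] using this }
    let g : H →L[ℂ] ℂ := f.mkContinuous (C * ‖v‖) (fun u => by
      have := hC u v hv
      change ‖a u v‖ ≤ _
      linarith)
    refine ⟨(InnerProductSpace.toDual ℂ H).symm g, fun u => ?_⟩
    rw [InnerProductSpace.toDual_symm_apply]
    rfl
  -- basic estimates
  have hmem : ∀ δ, 0 < δ → (sol δ).1 - E ∈ V₀ := by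
    intro δ hδ
    have := V₀.sub_mem (hsol δ hδ).1.1 hE_mem
    simpa using this
  have haF : ∀ δ, 0 < δ → ∀ ψ ∈ M, a ((sol δ).1 - E) ψ = ⟪ψ, (sol δ).2⟫ := by
    intro δ hδ ψ hψ
    rw [ha_sub _ _ _ hψ, hE_eq ψ hψ, ← (hsol δ hδ).2.2 ψ hψ]; ring
  have key : ∀ δ, 0 < δ →
      ‖(sol δ).2‖ ^ 2 = - (δ * (⟪(sol δ).1 - E, (sol δ).1⟫).re) := by
    intro δ hδ
    have h1 := (hsol δ hδ).2.1 _ (hmem δ hδ)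
    rw [haF δ hδ _ (hsol δ hδ).1.2, inner_conj_symm] at h1
    have h2 := congrArg Complex.re h1
    rw [inner_self_eq_norm_sq_to_K] at h2
    simp only [Complex.add_re, Complex.re_ofReal_mul, Complex.zero_re] at h2
    have h3 : (((‖(sol δ).2‖ : ℝ) : ℂ) ^ 2).re = ‖(sol δ).2‖ ^ 2 := by
      rw [← Complex.ofReal_pow, Complex.ofReal_re]
    have h4 := h3
    erw [h3] at h2
    linarith
  have hre : ∀ δ, 0 < δ → (⟪(sol δ).1 - E, (sol δ).1⟫).re ≤ 0 := by
    intro δ hδ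
    have h1 := key δ hδ
    have h2 : 0 ≤ ‖(sol δ).2‖ ^ 2 := by positivity
    by_contra! h
    have := mul_pos hδ h
    linarith
  have hsq : ∀ x : H, (⟪x, x⟫).re = ‖x‖ ^ 2 := fun x => by
    have := @inner_self_eq_norm_sq ℂ H _ _ _ x
    simpa using this
  have hdec : ∀ δ, 0 < δ → ‖(sol δ).1‖ ≤ ‖E‖ := by
    intro δ hδ
    have h1 := hre δ hδ
    rw [inner_sub_left, Complex.sub_re, hsq] at h1
    have h2 := (Complex.re_le_norm _).trans (norm_inner_le_norm (𝕜 := ℂ) E (sol δ).1)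
    by_contra! h
    have h0 := norm_nonneg E
    nlinarith
  have hebd : ∀ δ, 0 < δ → ‖(sol δ).1 - E‖ ≤ 2 * ‖E‖ := by
    intro δ hδ
    linarith [norm_sub_le (sol δ).1 E, hdec δ hδ]
  have hFbd : ∀ δ, 0 < δ → ‖(sol δ).2‖ ^ 2 ≤ δ * (2 * ‖E‖ * ‖E‖) := by
    intro δ hδ
    rw [key δ hδ, ← mul_neg]
    gcongr
    calc -(⟪(sol δ).1 - E, (sol δ).1⟫).re ≤ |(⟪(sol δ).1 - E, (sol δ).1⟫).re| := neg_le_abs _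
      _ ≤ ‖⟪(sol δ).1 - E, (sol δ).1⟫‖ := Complex.abs_re_le_norm _
      _ ≤ ‖(sol δ).1 - E‖ * ‖(sol δ).1‖ := norm_inner_le_norm _ _
      _ ≤ 2 * ‖E‖ * ‖E‖ := by
        gcongr
        · exact hebd δ hδ
        · exact hdec δ hδ
  have hnull : ∀ z : ℕ → H, Tendsto (fun n => ‖z n‖ ^ 2) atTop (𝓝 0) →
      Tendsto z atTop (𝓝 0) := by
    intro z hz
    rw [tendsto_zero_iff_norm_tendsto_zero]
    have := (Real.continuous_sqrt.tendsto 0).comp hz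
    simpa [Function.comp_def, Real.sqrt_sq] using this
  have hF : Tendsto (fun n => (sol (δn n)).2) atTop (𝓝 (0 : H)) := by
    apply hnull
    refine squeeze_zero (fun n => by positivity) (fun n => hFbd _ (hδn_pos n)) ?_
    simpa using hδn_lim.mul_const (2 * ‖E‖ * ‖E‖)
  refine ⟨?_, hF⟩
  have hweak : Tendsto (fun n => ⟪E, (sol (δn n)).1 - E⟫) atTop (𝓝 0) := by
    refine qr_weak_aux _ (2 * ‖E‖) (fun n => hebd _ (hδn_pos n)) ?_ E
    intro x hx
    haveI : CompleteSpace V₀ := hV₀.completeSpace_coe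
    have hxV : x ∈ V₀ := by
      rw [← Submodule.orthogonal_orthogonal V₀, Submodule.mem_orthogonal]
      intro w hw
      apply hx
      have : ∀ n, ⟪w, (sol (δn n)).1 - E⟫ = 0 := fun n =>
        (Submodule.mem_orthogonal' V₀ w).1 hw _ (hmem _ (hδn_pos n))
      simp only [this]
      exact tendsto_const_nhds
    have hxa : ∀ ψ ∈ M, a x ψ = 0 := by
      intro ψ hψ
      obtain ⟨w, hw⟩ := hriesz ψ hψ
      rw [hw]
      apply hx
      simp only [← hw]
      have : ∀ n, a ((sol (δn n)).1 - E) ψ = ⟪ψ, (sol (δn n)).2⟫ := fun n =>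
        haF _ (hδn_pos n) ψ hψ
      simp only [this]
      have h := Tendsto.inner (𝕜 := ℂ) (tendsto_const_nhds (x := ψ)) hF
      simpa using h
    have := hE_unique (x + E) (by
      rw [add_sub_assoc]; exact V₀.add_mem hxV hE_mem) (fun ψ hψ => by
      rw [ha_add _ _ _ hψ, hxa ψ hψ, hE_eq ψ hψ, zero_add])
    simpa using this
  rw [← tendsto_sub_nhds_zero_iff]
  apply hnull
  refine squeeze_zero (fun n => by positivity)
    (g := fun n => ‖⟪E, (sol (δn n)).1 - E⟫‖) (fun n => ?_) (by simpa using hweak.norm)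
  have h1 := hre _ (hδn_pos n)
  have h2 : (⟪(sol (δn n)).1 - E, E⟫).re = (⟪E, (sol (δn n)).1 - E⟫).re := by
    rw [← inner_conj_symm, Complex.conj_re]
  have h3 := hsq ((sol (δn n)).1 - E)
  rw [inner_sub_right, Complex.sub_re, h2] at h3
  have h4 := neg_le_abs (⟪E, (sol (δn n)).1 - E⟫).re
  have h5 := Complex.abs_re_le_norm ⟪E, (sol (δn n)).1 - E⟫
  linarith
end

section
/- Let δ > 0, let V₀ʰ ⊆ V₀ and Mʰ ⊆ M be closed subspaces, and let C > 0 be a continuity constant for the QR block form, i.e. |δ⟨u,φ⟩_H + conj(a(φ,v)) − a(u,ψ) + ⟨v,ψ⟩_H| ≤ C (‖u‖_H² + ‖v‖_H²)^{1/2} (‖φ‖_H² + ‖ψ‖_H²)^{1/2} for all u, φ ∈ H and v, ψ ∈ M. Then the discrete QR problem — find (E_δʰ, F_δʰ) ∈ (U + V₀ʰ) × Mʰ with δ⟨E_δʰ, φ⟩_H + conj(a(φ, F_δʰ)) = 0 for all φ ∈ V₀ʰ and a(E_δʰ, ψ) − ⟨F_δʰ, ψ⟩_H = ℓ(ψ)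 for all ψ ∈ Mʰ — has a unique solution, and if (E_δ, F_δ) is the solution of the continuous QR mixed problem, then for every φ ∈ U + V₀ʰ and ψ ∈ Mʰ: (‖E_δ − E_δʰ‖_H² + ‖F_δ − F_δʰ‖_H²)^{1/2} ≤ (C / min(δ,1)) (‖E_δ − φ‖_H² + ‖F_δ − ψ‖_H²)^{1/2}. (Céa-type quasi-optimality underlying Proposition 3.3.) -/
open ComplexConjugate

local notation "⟪" x ", " y "⟫" => @inner ℂ _ _ x y

theorem qr_exists_aux {V N : Type*} {H : Type*}
    [NormedAddCommGroup H] [InnerProductSpace ℂ H]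
    [NormedAddCommGroup V] [InnerProductSpace ℂ V] [CompleteSpace V]
    [NormedAddCommGroup N] [InnerProductSpace ℂ N] [CompleteSpace N]
    (B : V →L[ℂ] N) (δ : ℝ) (hδ : 0 < δ) (r : V) :
    ∃ w : V, (δ : ℂ) • w + B.adjoint (B w) = r := by
  let T : V →L[ℂ] V := (δ : ℂ) • ContinuousLinearMap.id ℂ V + B.adjoint.comp B
  have hT : IsUnit T := by
    refine ContinuousLinearMap.isUnit_of_forall_le_norm_inner_map T (c := ⟨δ, hδ.le⟩) hδ ?_
    intro x
    have h : inner ℂ (T x) x = ((δ * ‖x‖ ^ 2 + ‖B x‖ ^ 2 : ℝ) : ℂ) := by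
      simp [T, inner_add_left, inner_smul_left, ContinuousLinearMap.adjoint_inner_left,
        inner_self_eq_norm_sq_to_K]
    rw [h, Complex.norm_real, Real.norm_eq_abs]
    refine le_trans ?_ (le_abs_self _)
    change ‖x‖ ^ 2 * δ ≤ _
    nlinarith [sq_nonneg ‖B x‖]
  obtain ⟨w, hw⟩ := ((ContinuousLinearMap.isUnit_iff_bijective).1 hT).2 r
  exact ⟨w, by simpa [T] using hw⟩

theorem qr_riesz_aux {H : Type*} [NormedAddCommGroup H] [InnerProductSpace ℂ H]
    [CompleteSpace H] (N : Submodule ℂ H) [CompleteSpace N]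
    (a : H → H → ℂ)
    (h1 : ∀ (c : ℂ) (u u' v : H), v ∈ N → a (c • u + u') v = c * a u v + a u' v)
    (h2 : ∀ (c : ℂ) (u v v' : H), v ∈ N → v' ∈ N →
      a u (c • v + v') = conj c * a u v + a u v')
    (h3 : ∃ C : ℝ, ∀ (u v : H), v ∈ N → ‖a u v‖ ≤ C * ‖u‖ * ‖v‖) :
    ∃ A : H →L[ℂ] N, ∀ u, ∀ v : N, a u v = inner ℂ v (A u) := by
  obtain ⟨K, hK⟩ := h3
  have z1 : ∀ v ∈ N, a 0 v = 0 := fun v hv => by simpa using h1 1 0 0 v hv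
  have z2 : ∀ u, a u 0 = 0 := fun u => by simpa using h2 1 u 0 0 N.zero_mem N.zero_mem
  let b : H →ₗ⋆[ℂ] N →ₗ[ℂ] ℂ := LinearMap.mk₂'ₛₗ (starRingEnd ℂ) (RingHom.id ℂ)
    (fun u v => conj (a u v))
    (fun u u' v => by simpa using congrArg conj (h1 1 u u' v v.2))
    (fun c u v => by simpa [z1 v v.2] using congrArg conj (h1 c u 0 v v.2))
    (fun u v v' => by simpa using congrArg conj (h2 1 u v v' v.2 v'.2))
    (fun c u v => by simpa [z2] using congrArg conj (h2 c u v 0 v.2 N.zero_mem))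
  let b' := b.mkContinuous₂ K (fun u v => by simpa [b] using hK u v v.2)
  let A : H →L[ℂ] N :=
    ((InnerProductSpace.toDual ℂ N).symm.toContinuousLinearEquiv : _ →L⋆[ℂ] N).comp b'
  refine ⟨A, fun u v => ?_⟩
  have : inner ℂ (A u) v = conj (a u v) := by
    simp [A, b', b]
  rw [← inner_conj_symm, this, Complex.conj_conj]

/-- the discrete QR problem on conforming subspaces `V₀ʰ ⊆ V₀`, `Mʰ ⊆ M`
has a unique solution and satisfies the Céa-type quasi-optimality estimate with constant
`C / min(δ,1)`. -/
theorem qr_discrete_wellposed_and_cea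
    {H : Type*} [NormedAddCommGroup H] [InnerProductSpace ℂ H] [CompleteSpace H]
    (V₀ M : Submodule ℂ H)
    (hV₀ : IsClosed (V₀ : Set H)) (hM : IsClosed (M : Set H))
    (a : H → H → ℂ)
    (ha_lin : ∀ (c : ℂ) (u u' v : H), v ∈ M → a (c • u + u') v = c * a u v + a u' v)
    (ha_conj : ∀ (c : ℂ) (u v v' : H), v ∈ M → v' ∈ M →
      a u (c • v + v') = conj c * a u v + a u v')
    (ha_bdd : ∃ C : ℝ, ∀ (u v : H), v ∈ M → ‖a u v‖ ≤ C * ‖u‖ * ‖v‖)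
    (ℓ : H → ℂ)
    (hℓ_conj : ∀ (c : ℂ) (v w : H), v ∈ M → w ∈ M → ℓ (c • v + w) = conj c * ℓ v + ℓ w)
    (hℓ_bdd : ∃ C : ℝ, ∀ v ∈ M, ‖ℓ v‖ ≤ C * ‖v‖)
    (U : H) (δ : ℝ) (hδ : 0 < δ)
    (V₀h Mh : Submodule ℂ H)
    (hV₀h_le : V₀h ≤ V₀) (hMh_le : Mh ≤ M)
    (hV₀h : IsClosed (V₀h : Set H)) (hMh : IsClosed (Mh : Set H))
    (C : ℝ) (hC_pos : 0 < C)
    (hC : ∀ (u φ v ψ : H), v ∈ M → ψ ∈ M →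
      ‖(δ : ℂ) * ⟪φ, u⟫ + conj (a φ v) - a u ψ + ⟪ψ, v⟫‖ ≤
        C * Real.sqrt (‖u‖ ^ 2 + ‖v‖ ^ 2) * Real.sqrt (‖φ‖ ^ 2 + ‖ψ‖ ^ 2)) :
    (∃! p : H × H, (p.1 - U ∈ V₀h ∧ p.2 ∈ Mh) ∧
      (∀ φ ∈ V₀h, (δ : ℂ) * ⟪φ, p.1⟫ + conj (a φ p.2) = 0) ∧
      (∀ ψ ∈ Mh, a p.1 ψ - ⟪ψ, p.2⟫ = ℓ ψ)) ∧
    (∀ Eδ Fδ Eδh Fδh : H,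
      (Eδ - U ∈ V₀ ∧ Fδ ∈ M) →
      (∀ φ ∈ V₀, (δ : ℂ) * ⟪φ, Eδ⟫ + conj (a φ Fδ) = 0) →
      (∀ ψ ∈ M, a Eδ ψ - ⟪ψ, Fδ⟫ = ℓ ψ) →
      (Eδh - U ∈ V₀h ∧ Fδh ∈ Mh) →
      (∀ φ ∈ V₀h, (δ : ℂ) * ⟪φ, Eδh⟫ + conj (a φ Fδh) = 0) →
      (∀ ψ ∈ Mh, a Eδh ψ - ⟪ψ, Fδh⟫ = ℓ ψ) →
      ∀ φ ψ : H, φ - U ∈ V₀h → ψ ∈ Mh →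
        Real.sqrt (‖Eδ - Eδh‖ ^ 2 + ‖Fδ - Fδh‖ ^ 2) ≤
          (C / min δ 1) * Real.sqrt (‖Eδ - φ‖ ^ 2 + ‖Fδ - ψ‖ ^ 2)) := by
  have sub1 : ∀ u u' v : H, v ∈ M → a (u - u') v = a u v - a u' v := fun u u' v hv => by
    have := ha_lin (-1) u' u v hv
    rw [show u - u' = (-1 : ℂ) • u' + u by module, this]; ring
  have sub2 : ∀ u v v' : H, v ∈ M → v' ∈ M → a u (v - v') = a u v - a u v' :=
    fun u v v' hv hv' => by
    have := ha_conj (-1) u v' v hv' hv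
    rw [show v - v' = (-1 : ℂ) • v' + v by module, this]; simp; ring
  have selfr : ∀ x : H, ⟪x, x⟫ = ((‖x‖ ^ 2 : ℝ) : ℂ) := fun x => by
    simp [inner_self_eq_norm_sq_to_K]
  have : CompleteSpace V₀h := hV₀h.completeSpace_coe
  have : CompleteSpace Mh := hMh.completeSpace_coe
  refine ⟨?_, ?_⟩
  · obtain ⟨A, hA⟩ := qr_riesz_aux Mh a (fun c u u' v hv => ha_lin c u u' v (hMh_le hv))
      (fun c u v v' hv hv' => ha_conj c u v v' (hMh_le hv) (hMh_le hv'))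
      (ha_bdd.imp fun K h u v hv => h u v (hMh_le hv))
    have hL : ∃ L : Mh, ∀ v : Mh, ℓ v = ⟪v, L⟫ := by
      obtain ⟨K, hK⟩ := hℓ_bdd
      have z : ℓ 0 = 0 := by simpa using hℓ_conj 1 0 0 M.zero_mem M.zero_mem
      let f : Mh →ₗ[ℂ] ℂ :=
        { toFun := fun v => conj (ℓ v)
          map_add' := fun v w => by
            simpa using congrArg conj (hℓ_conj 1 v w (hMh_le v.2) (hMh_le w.2))
          map_smul' := fun c v => by
            simpa [z] using congrArg conj (hℓ_conj c v 0 (hMh_le v.2) M.zero_mem) }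
      let f' := f.mkContinuous K (fun v => by simpa [f] using hK v (hMh_le v.2))
      refine ⟨(InnerProductSpace.toDual ℂ Mh).symm f', fun v => ?_⟩
      rw [← inner_conj_symm, InnerProductSpace.toDual_symm_apply]
      simp [f', f]
    obtain ⟨L, hL⟩ := hL
    let B : V₀h →L[ℂ] Mh := A.comp V₀h.subtypeL
    obtain ⟨w, hw⟩ := qr_exists_aux (H := H) B δ hδ
      (B.adjoint (L - A U) - (δ : ℂ) • V₀h.subtypeL.adjoint U)
    refine existsUnique_of_exists_of_unique
      ⟨(U + w, ((A (U + w) - L : Mh) : H)), ⟨by simp, (A (U + w) - L).2⟩, ?_, ?_⟩ ?_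
    · intro φ hφ
      have h := congrArg (fun x => ⟪(⟨φ, hφ⟩ : V₀h), x⟫) hw
      simp only [inner_add_right, inner_sub_right, inner_smul_right,
        ContinuousLinearMap.adjoint_inner_right] at h
      simp only [B, ContinuousLinearMap.comp_apply, Submodule.subtypeL_apply,
        Submodule.coe_inner] at h
      simp only
      rw [hA φ (A (U + w) - L), inner_conj_symm, map_add]
      simp only [inner_add_right, inner_sub_right, Submodule.coe_inner]
      linear_combination h
    · intro ψ hψ
      have e1 := hA (U + w) ⟨ψ, hψ⟩
      have e2 := hL ⟨ψ, hψ⟩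
      simp only [Submodule.coe_inner] at e1 e2
      simp only [Submodule.coe_sub, inner_sub_right]
      rw [e1, e2]; ring
    · have uniq : ∀ p q : H × H, ((p.1 - U ∈ V₀h ∧ p.2 ∈ Mh) ∧
          (∀ φ ∈ V₀h, (δ : ℂ) * ⟪φ, p.1⟫ + conj (a φ p.2) = 0) ∧
          (∀ ψ ∈ Mh, a p.1 ψ - ⟪ψ, p.2⟫ = ℓ ψ)) → ((q.1 - U ∈ V₀h ∧ q.2 ∈ Mh) ∧
          (∀ φ ∈ V₀h, (δ : ℂ) * ⟪φ, q.1⟫ + conj (a φ q.2) = 0) ∧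
          (∀ ψ ∈ Mh, a q.1 ψ - ⟪ψ, q.2⟫ = ℓ ψ)) → p = q := by
        rintro ⟨p1, p2⟩ ⟨q1, q2⟩ ⟨⟨hp1, hp2⟩, hp3, hp4⟩ ⟨⟨hq1, hq2⟩, hq3, hq4⟩
        simp only at *
        have hw' : p1 - q1 ∈ V₀h := by simpa using V₀h.sub_mem hp1 hq1
        have hz : p2 - q2 ∈ Mh := Mh.sub_mem hp2 hq2
        have k1 : (δ : ℂ) * ⟪p1 - q1, p1 - q1⟫ + conj (a (p1 - q1) (p2 - q2)) = 0 := by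
          rw [sub2 _ _ _ (hMh_le hp2) (hMh_le hq2), map_sub, inner_sub_right]
          linear_combination hp3 _ hw' - hq3 _ hw'
        have k2 : a (p1 - q1) (p2 - q2) = ⟪p2 - q2, p2 - q2⟫ := by
          rw [sub1 _ _ _ (hMh_le hz), inner_sub_right]
          linear_combination hp4 _ hz - hq4 _ hz
        rw [k2, selfr, selfr, Complex.conj_ofReal] at k1
        have k3 : δ * ‖p1 - q1‖ ^ 2 + ‖p2 - q2‖ ^ 2 = 0 := by exact_mod_cast k1
        have n1 : 0 ≤ δ * ‖p1 - q1‖ ^ 2 := by positivity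
        have n2 : 0 ≤ ‖p2 - q2‖ ^ 2 := by positivity
        have m1 : δ * ‖p1 - q1‖ ^ 2 = 0 := by linarith
        have m2 : ‖p2 - q2‖ ^ 2 = 0 := by linarith
        have m1' : ‖p1 - q1‖ ^ 2 = 0 := (mul_eq_zero.1 m1).resolve_left hδ.ne'
        have o1 : p1 = q1 := by
          simpa [sub_eq_zero] using m1'
        have o2 : p2 = q2 := by
          simpa [sub_eq_zero] using m2
        rw [o1, o2]
      exact fun p q hp hq => uniq p q hp hq
  · rintro E F Eh Fh ⟨hE, hF⟩ c1 c2 ⟨hEh, hFh⟩ d1 d2 φ ψ hφ hψ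
    have hd1 : φ - Eh ∈ V₀h := by simpa using V₀h.sub_mem hφ hEh
    have hd2 : ψ - Fh ∈ Mh := Mh.sub_mem hψ hFh
    have hFM := hMh_le hFh
    have hψM := hMh_le hψ
    have he2 : F - Fh ∈ M := M.sub_mem hF hFM
    have g1 : (δ : ℂ) * ⟪φ - Eh, E - Eh⟫ + conj (a (φ - Eh) (F - Fh)) = 0 := by
      rw [sub2 _ _ _ hF hFM, map_sub, inner_sub_right]
      linear_combination c1 _ (hV₀h_le hd1) - d1 _ hd1
    have g2 : a (E - Eh) (ψ - Fh) - ⟪ψ - Fh, F - Fh⟫ = 0 := by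
      rw [sub1 _ _ _ (hMh_le hd2), inner_sub_right]
      linear_combination c2 _ (hMh_le hd2) - d2 _ hd2
    have key := hC (E - Eh) (E - φ) (F - Fh) (F - ψ) he2 (M.sub_mem hF hψM)
    have e1 : E - φ = (E - Eh) - (φ - Eh) := by abel
    have e2 : F - ψ = (F - Fh) - (ψ - Fh) := by abel
    have id1 : (δ : ℂ) * ⟪E - φ, E - Eh⟫ + conj (a (E - φ) (F - Fh)) - a (E - Eh) (F - ψ)
        + ⟪F - ψ, F - Fh⟫ = (δ : ℂ) * ⟪E - Eh, E - Eh⟫ + conj (a (E - Eh) (F - Fh))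
        - a (E - Eh) (F - Fh) + ⟪F - Fh, F - Fh⟫ := by
      rw [e1, e2, inner_sub_left (E - Eh), inner_sub_left (F - Fh), sub1 (E - Eh) _ _ he2,
        sub2 (E - Eh) (F - Fh) _ he2 (hMh_le hd2), map_sub]
      linear_combination g2 - g1
    have re1 := (Complex.re_le_norm _).trans key
    rw [id1, selfr, selfr] at re1
    have id2 : ((δ : ℂ) * ((‖E - Eh‖ ^ 2 : ℝ) : ℂ) + conj (a (E - Eh) (F - Fh))
        - a (E - Eh) (F - Fh) + ((‖F - Fh‖ ^ 2 : ℝ) : ℂ)).re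
        = δ * ‖E - Eh‖ ^ 2 + ‖F - Fh‖ ^ 2 := by
      rw [← Complex.ofReal_mul]
      simp only [Complex.add_re, Complex.sub_re, Complex.conj_re, Complex.ofReal_re]
      ring
    rw [id2] at re1
    set x := ‖E - Eh‖ ^ 2 with hx
    set y := ‖F - Fh‖ ^ 2 with hy
    have hx0 : 0 ≤ x := by positivity
    have hy0 : 0 ≤ y := by positivity
    set S := Real.sqrt (x + y) with hS
    set R := Real.sqrt (‖E - φ‖ ^ 2 + ‖F - ψ‖ ^ 2) with hR
    have hR0 : 0 ≤ R := Real.sqrt_nonneg _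
    have hS0 : 0 ≤ S := Real.sqrt_nonneg _
    have hm : 0 < min δ 1 := lt_min hδ one_pos
    have hSS : S * S = x + y := Real.mul_self_sqrt (by positivity)
    rw [div_mul_eq_mul_div, le_div_iff₀ hm]
    rcases hS0.eq_or_lt with h0 | h0
    · rw [← h0, zero_mul]; positivity
    · have q1 : min δ 1 * x ≤ δ * x := mul_le_mul_of_nonneg_right (min_le_left _ _) hx0
      have q2 : min δ 1 * y ≤ 1 * y := mul_le_mul_of_nonneg_right (min_le_right _ _) hy0
      refine le_of_mul_le_mul_right ?_ h0
      calc S * min δ 1 * S = min δ 1 * x + min δ 1 * y := by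
            rw [← mul_add, ← hSS]; ring
        _ ≤ C * S * R := by linarith
        _ = C * R * S := by ring
end

section
/- For every δ > 0 and η > 0, the relaxed QR problem admits exactly one solution: there exists a unique pair (E_α, F_α) ∈ V × M such that δ⟨E_α, φ⟩_V + η²⟨γE_α − f, γφ⟩_L + conj(a(φ, F_α)) = 0 for all φ ∈ V and a(E_α, ψ) − ⟨F_α, ψ⟩_V = ℓ(ψ) for all ψ ∈ M. (Abstract form of the well-posedness part of Theorem 4.1.) -/
open ComplexConjugate

local notation "⟪" x ", " y "⟫" => @inner ℂ _ _ x y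

/-- for every `δ > 0` and `η > 0`, the relaxed QR problem admits exactly
one solution `(E_α, F_α) ∈ V × M`. (Paper inner products `⟨u,φ⟩` are linear in the
first argument, hence written as `⟪φ, u⟫` in Mathlib's convention.) -/
theorem relaxed_qr_wellposed
    {V L : Type*} [NormedAddCommGroup V] [InnerProductSpace ℂ V] [CompleteSpace V]
    [NormedAddCommGroup L] [InnerProductSpace ℂ L] [CompleteSpace L]
    (M : Submodule ℂ V) (hM : IsClosed (M : Set V))
    (a : V → V → ℂ)
    (ha_lin : ∀ (c : ℂ) (u u' v : V), v ∈ M → a (c • u + u') v = c * a u v + a u' v)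
    (ha_conj : ∀ (c : ℂ) (u v v' : V), v ∈ M → v' ∈ M →
      a u (c • v + v') = conj c * a u v + a u v')
    (ha_bdd : ∃ C : ℝ, ∀ (u v : V), v ∈ M → ‖a u v‖ ≤ C * ‖u‖ * ‖v‖)
    (γ : V →L[ℂ] L) (f : L)
    (ℓ : V → ℂ)
    (hℓ_conj : ∀ (c : ℂ) (v w : V), v ∈ M → w ∈ M → ℓ (c • v + w) = conj c * ℓ v + ℓ w)
    (hℓ_bdd : ∃ C : ℝ, ∀ v ∈ M, ‖ℓ v‖ ≤ C * ‖v‖)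
    (δ η : ℝ) (hδ : 0 < δ) (hη : 0 < η) :
    ∃! p : V × V, p.2 ∈ M ∧
      (∀ φ : V, (δ : ℂ) * ⟪φ, p.1⟫ + (η : ℂ) ^ 2 * ⟪γ φ, γ p.1 - f⟫ + conj (a φ p.2) = 0) ∧
      (∀ ψ ∈ M, a p.1 ψ - ⟪ψ, p.2⟫ = ℓ ψ) := by
  haveI : CompleteSpace M := hM.completeSpace_coe
  obtain ⟨C, hC⟩ := ha_bdd
  obtain ⟨D, hD⟩ := hℓ_bdd
  have rep : ∀ v : M, ∃ b : V, ∀ u : V, ⟪b, u⟫ = a u v := by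
    intro v
    have h0 : a 0 v = 0 := by
      have := ha_lin 1 0 0 v v.2
      simpa using this
    let g : V →ₗ[ℂ] ℂ :=
      { toFun := fun u => a u v
        map_add' := fun x y => by simpa using ha_lin 1 x y v v.2
        map_smul' := fun c x => by simpa [h0] using ha_lin c x 0 v v.2 }
    let g' : V →L[ℂ] ℂ := g.mkContinuous (C * ‖v‖) (fun u => by
      have := hC u v v.2
      calc ‖a u v‖ ≤ C * ‖u‖ * ‖(v : V)‖ := this
        _ = C * ‖v‖ * ‖u‖ := by rw [Submodule.coe_norm]; ring)
    refine ⟨(InnerProductSpace.toDual ℂ V).symm g', fun u => ?_⟩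
    rw [InnerProductSpace.toDual_symm_apply]
    rfl
  choose b hb using rep
  have h0' : ∀ u, a u 0 = 0 := by
    intro u
    have := ha_conj 1 u 0 0 M.zero_mem M.zero_mem
    simpa using this
  let B0 : M →ₗ[ℂ] V :=
    { toFun := b
      map_add' := fun x y => by
        refine ext_inner_right ℂ fun u => ?_
        rw [inner_add_left, hb, hb, hb]
        simpa using ha_conj 1 u x y x.2 y.2
      map_smul' := fun c x => by
        refine ext_inner_right ℂ fun u => ?_
        rw [RingHom.id_apply, inner_smul_left, hb, hb]
        simpa [h0'] using ha_conj c u x 0 x.2 M.zero_mem }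
  let B : M →L[ℂ] V := B0.mkContinuous C (fun v => by
    have h1 : ‖a (b v) v‖ ≤ C * ‖b v‖ * ‖(v : V)‖ := hC (b v) v v.2
    rw [← hb v (b v), inner_self_eq_norm_sq_to_K] at h1
    have h2 : ‖b v‖ ^ 2 ≤ C * ‖b v‖ * ‖(v : V)‖ := by simpa using h1
    change ‖b v‖ ≤ C * ‖(v : V)‖
    rcases (norm_nonneg (b v)).eq_or_lt with h | h
    · have h3 := (norm_nonneg _).trans (hC (v : V) v v.2)
      rw [← h]
      rcases (norm_nonneg (v : V)).eq_or_lt with h4 | h4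
      · rw [← h4]; simp
      · by_contra hh
        push Not at hh
        nlinarith
    · by_contra hh
      push Not at hh
      nlinarith)
  have hB : ∀ (v : M) (u : V), ⟪B v, u⟫ = a u v := fun v u => hb v u
  have hl0 : ℓ 0 = 0 := by
    have := hℓ_conj 1 0 0 M.zero_mem M.zero_mem
    simpa using this
  obtain ⟨l, hl⟩ : ∃ l : M, ∀ ψ : M, ⟪ψ, l⟫ = ℓ ψ := by
    let g : M →ₗ[ℂ] ℂ :=
      { toFun := fun u => conj (ℓ u)
        map_add' := fun x y => by
          have := hℓ_conj 1 x y x.2 y.2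
          rw [← map_add]
          congr 1
          simpa using this
        map_smul' := fun c x => by
          have := hℓ_conj c x 0 x.2 M.zero_mem
          simp only [add_zero, hl0] at this
          simp [this] }
    let g' : M →L[ℂ] ℂ := g.mkContinuous D (fun u => by
      change ‖conj (ℓ u)‖ ≤ _
      rw [RCLike.norm_conj]
      exact hD u u.2)
    refine ⟨(InnerProductSpace.toDual ℂ M).symm g', fun u => ?_⟩
    rw [← inner_conj_symm, InnerProductSpace.toDual_symm_apply]
    change conj (conj (ℓ u)) = _
    simp
  let T : V →L[ℂ] V := (δ : ℂ) • ContinuousLinearMap.id ℂ V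
    + (η : ℂ) ^ 2 • (γ.adjoint ∘L γ) + B ∘L B.adjoint
  have hT : ∀ φ E, ⟪φ, T E⟫ = (δ : ℂ) * ⟪φ, E⟫ + (η : ℂ) ^ 2 * ⟪γ φ, γ E⟫
      + ⟪B.adjoint φ, B.adjoint E⟫ := by
    intro φ E
    rw [ContinuousLinearMap.adjoint_inner_left B]
    simp [T, inner_add_right, inner_smul_right, ContinuousLinearMap.adjoint_inner_right]
  have hU : IsUnit T := by
    refine ContinuousLinearMap.isUnit_of_forall_le_norm_inner_map T (c := ⟨δ, hδ.le⟩) hδ ?_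
    intro x
    have h1 : ⟪x, T x⟫ = ((δ * ‖x‖ ^ 2 + η ^ 2 * ‖γ x‖ ^ 2 + ‖B.adjoint x‖ ^ 2 : ℝ) : ℂ) := by
      rw [hT, inner_self_eq_norm_sq_to_K, inner_self_eq_norm_sq_to_K, inner_self_eq_norm_sq_to_K]
      push_cast
      rfl
    rw [norm_inner_symm, h1, Complex.norm_real, Real.norm_of_nonneg (by positivity)]
    change ‖x‖ ^ 2 * δ ≤ _
    nlinarith [sq_nonneg (η * ‖γ x‖), sq_nonneg ‖B.adjoint x‖]
  have hbij : Function.Bijective T := by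
    exact ContinuousLinearMap.isUnit_iff_bijective.mp hU
  let r : V := B l + (η : ℂ) ^ 2 • γ.adjoint f
  have key : ∀ (E : V) (F : M),
      ((∀ φ : V, (δ : ℂ) * ⟪φ, E⟫ + (η : ℂ) ^ 2 * ⟪γ φ, γ E - f⟫ + conj (a φ F) = 0) ∧
      (∀ ψ ∈ M, a E ψ - ⟪ψ, (F : V)⟫ = ℓ ψ)) ↔ (T E = r ∧ F = B.adjoint E - l) := by
    intro E F
    have e2 : (∀ ψ ∈ M, a E ψ - ⟪ψ, (F : V)⟫ = ℓ ψ) ↔ F = B.adjoint E - l := by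
      have e : ∀ ψ : M, a E ψ - ⟪(ψ : V), (F : V)⟫ - ℓ ψ = ⟪ψ, (B.adjoint E - l) - F⟫ := by
        intro ψ
        rw [inner_sub_right, inner_sub_right, ContinuousLinearMap.adjoint_inner_right, hB, hl,
          Submodule.coe_inner]
        ring
      constructor
      · intro h
        refine (sub_eq_zero.mp (ext_inner_left ℂ fun ψ => ?_)).symm
        rw [← e, h ψ ψ.2, inner_zero_right, sub_self]
      · intro h ψ hψ
        have := e ⟨ψ, hψ⟩
        rw [← h, sub_self, inner_zero_right] at this
        exact sub_eq_zero.mp this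
    rw [e2]
    refine and_congr_left fun hF => ?_
    have e1 : ∀ φ : V, (δ : ℂ) * ⟪φ, E⟫ + (η : ℂ) ^ 2 * ⟪γ φ, γ E - f⟫ + conj (a φ F)
        = ⟪φ, T E - r⟫ := by
      intro φ
      rw [← hB, inner_conj_symm, hF, inner_sub_right φ, hT, ContinuousLinearMap.adjoint_inner_left B]
      simp only [r, map_sub, inner_sub_right, inner_add_right, inner_smul_right,
        ContinuousLinearMap.adjoint_inner_right]
      ring
    simp only [e1]
    constructor
    · intro h
      refine sub_eq_zero.mp (ext_inner_left ℂ fun φ => ?_)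
      rw [h, inner_zero_right]
    · intro h φ
      rw [h, sub_self, inner_zero_right]
  obtain ⟨E, hE⟩ := hbij.2 r
  refine ⟨(E, ((B.adjoint E - l : M) : V)), ⟨(B.adjoint E - l : M).2, (key E _).mpr ⟨hE, rfl⟩⟩, ?_⟩
  rintro ⟨E', F'⟩ ⟨hF', h⟩
  obtain ⟨h1, h2⟩ := (key E' ⟨F', hF'⟩).mp h
  have h3 : E' = E := hbij.1 (h1.trans hE.symm)
  subst h3
  exact Prod.ext rfl (congrArg Subtype.val h2)
end

section
/- Suppose there exists E ∈ V with γE = f and a(E, ψ) = ℓ(ψ) for all ψ ∈ M. Let δ, η > 0 and let (E_α, F_α) ∈ V × M be a solution of the relaxed QR problem. Then the fundamental relation δ⟨E_α, E_α − E⟩_V + η²‖γE_α − f‖_L² + ‖F_α‖_V² = 0 holds, and consequently ‖E_α‖_V ≤ ‖E‖_V (a bound independent of both δ and η). -/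
open ComplexConjugate

local notation "⟪" x ", " y "⟫" => @inner ℂ _ _ x y

/-- the fundamental relation
`δ⟨E_α, E_α − E⟩_V + η²‖γE_α − f‖_L² + ‖F_α‖_V² = 0` and the resulting bound
`‖E_α‖_V ≤ ‖E‖_V`, independent of both `δ` and `η`. -/
theorem relaxed_qr_fundamental_relation
    {V L : Type*} [NormedAddCommGroup V] [InnerProductSpace ℂ V] [CompleteSpace V]
    [NormedAddCommGroup L] [InnerProductSpace ℂ L] [CompleteSpace L]
    (M : Submodule ℂ V) (hM : IsClosed (M : Set V))
    (a : V → V → ℂ)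
    (ha_lin : ∀ (c : ℂ) (u u' v : V), v ∈ M → a (c • u + u') v = c * a u v + a u' v)
    (ha_conj : ∀ (c : ℂ) (u v v' : V), v ∈ M → v' ∈ M →
      a u (c • v + v') = conj c * a u v + a u v')
    (ha_bdd : ∃ C : ℝ, ∀ (u v : V), v ∈ M → ‖a u v‖ ≤ C * ‖u‖ * ‖v‖)
    (γ : V →L[ℂ] L) (f : L)
    (ℓ : V → ℂ)
    (hℓ_conj : ∀ (c : ℂ) (v w : V), v ∈ M → w ∈ M → ℓ (c • v + w) = conj c * ℓ v + ℓ w)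
    (hℓ_bdd : ∃ C : ℝ, ∀ v ∈ M, ‖ℓ v‖ ≤ C * ‖v‖)
    (E : V) (hE_trace : γ E = f) (hE_eq : ∀ ψ ∈ M, a E ψ = ℓ ψ)
    (δ η : ℝ) (hδ : 0 < δ) (hη : 0 < η)
    (Eα Fα : V) (hFα_mem : Fα ∈ M)
    (h_eq1 : ∀ φ : V, (δ : ℂ) * ⟪φ, Eα⟫ + (η : ℂ) ^ 2 * ⟪γ φ, γ Eα - f⟫ + conj (a φ Fα) = 0)
    (h_eq2 : ∀ ψ ∈ M, a Eα ψ - ⟪ψ, Fα⟫ = ℓ ψ) :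
    (δ : ℂ) * ⟪Eα - E, Eα⟫ + ((η ^ 2 * ‖γ Eα - f‖ ^ 2 : ℝ) : ℂ) + ((‖Fα‖ ^ 2 : ℝ) : ℂ) = 0 ∧
    ‖Eα‖ ≤ ‖E‖ := by
  have hs : a (Eα - E) Fα = ((‖Fα‖ ^ 2 : ℝ) : ℂ) := by
    have h1 := ha_lin (-1) E Eα Fα hFα_mem
    have h2 : (-1 : ℂ) • E + Eα = Eα - E := by
      rw [neg_one_smul]; abel
    rw [h2] at h1
    have h3 := h_eq2 Fα hFα_mem
    have h4 := hE_eq Fα hFα_mem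
    have h5 := inner_self_eq_norm_sq_to_K (𝕜 := ℂ) Fα
    rw [h5] at h3
    rw [h1, h4]
    push_cast
    simp only [Complex.coe_algebraMap] at h3
    linear_combination h3
  have key : (δ : ℂ) * ⟪Eα - E, Eα⟫ + ((η ^ 2 * ‖γ Eα - f‖ ^ 2 : ℝ) : ℂ)
      + ((‖Fα‖ ^ 2 : ℝ) : ℂ) = 0 := by
    have h := h_eq1 (Eα - E)
    have h5 := inner_self_eq_norm_sq_to_K (𝕜 := ℂ) (γ Eα - f)
    simp only [Complex.coe_algebraMap] at h5
    rw [hs, Complex.conj_ofReal, map_sub, hE_trace, h5] at h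
    rw [← h]
    push_cast
    ring
  refine ⟨key, ?_⟩
  have hre := congrArg Complex.re key
  rw [Complex.add_re, Complex.add_re, Complex.re_ofReal_mul, Complex.ofReal_re,
    Complex.ofReal_re, Complex.zero_re, inner_sub_left, Complex.sub_re] at hre
  have h6 : (⟪Eα, Eα⟫ : ℂ).re = ‖Eα‖ ^ 2 := inner_self_eq_norm_sq (𝕜 := ℂ) Eα
  have h7 : (⟪E, Eα⟫ : ℂ).re ≤ ‖E‖ * ‖Eα‖ := re_inner_le_norm (𝕜 := ℂ) E Eα
  rw [h6] at hre
  have h8 : 0 ≤ η ^ 2 * ‖γ Eα - f‖ ^ 2 := by positivity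
  have h9 : 0 ≤ ‖Fα‖ ^ 2 := by positivity
  have h10 : ‖Eα‖ ^ 2 - (⟪E, Eα⟫ : ℂ).re ≤ 0 := by
    by_contra hc
    push Not at hc
    have := mul_pos hδ hc
    linarith
  by_contra hc
  push Not at hc
  nlinarith [norm_nonneg E, norm_nonneg Eα]
end

section
/- Suppose there exists E ∈ V with γE = f and a(E, ψ) = ℓ(ψ) for all ψ ∈ M. Let δ, η > 0 and let (E_α, F_α) ∈ V × M be a solution of the relaxed QR problem. Then ‖F_α‖_V ≤ √δ · ‖E‖_V and ‖γE_α − f‖_L ≤ (√δ / η) · ‖E‖_V. (Estimates (4.5) and (4.6) of Theorem 4.1.) -/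
open ComplexConjugate

local notation "⟪" x ", " y "⟫" => @inner ℂ _ _ x y

/-- estimates (4.5) and (4.6):
`‖F_α‖_V ≤ √δ ‖E‖_V` and `‖γE_α − f‖_L ≤ (√δ/η) ‖E‖_V` for any solution of the
relaxed QR problem. -/
theorem relaxed_qr_estimates
    {V L : Type*} [NormedAddCommGroup V] [InnerProductSpace ℂ V] [CompleteSpace V]
    [NormedAddCommGroup L] [InnerProductSpace ℂ L] [CompleteSpace L]
    (M : Submodule ℂ V) (hM : IsClosed (M : Set V))
    (a : V → V → ℂ)
    (ha_lin : ∀ (c : ℂ) (u u' v : V), v ∈ M → a (c • u + u') v = c * a u v + a u' v)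
    (ha_conj : ∀ (c : ℂ) (u v v' : V), v ∈ M → v' ∈ M →
      a u (c • v + v') = conj c * a u v + a u v')
    (ha_bdd : ∃ C : ℝ, ∀ (u v : V), v ∈ M → ‖a u v‖ ≤ C * ‖u‖ * ‖v‖)
    (γ : V →L[ℂ] L) (f : L)
    (ℓ : V → ℂ)
    (hℓ_conj : ∀ (c : ℂ) (v w : V), v ∈ M → w ∈ M → ℓ (c • v + w) = conj c * ℓ v + ℓ w)
    (hℓ_bdd : ∃ C : ℝ, ∀ v ∈ M, ‖ℓ v‖ ≤ C * ‖v‖)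
    (E : V) (hE_trace : γ E = f) (hE_eq : ∀ ψ ∈ M, a E ψ = ℓ ψ)
    (δ η : ℝ) (hδ : 0 < δ) (hη : 0 < η)
    (Eα Fα : V) (hFα_mem : Fα ∈ M)
    (h_eq1 : ∀ φ : V, (δ : ℂ) * ⟪φ, Eα⟫ + (η : ℂ) ^ 2 * ⟪γ φ, γ Eα - f⟫ + conj (a φ Fα) = 0)
    (h_eq2 : ∀ ψ ∈ M, a Eα ψ - ⟪ψ, Fα⟫ = ℓ ψ) :
    ‖Fα‖ ≤ Real.sqrt δ * ‖E‖ ∧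
    ‖γ Eα - f‖ ≤ (Real.sqrt δ / η) * ‖E‖ := by
  have hD : (-1 : ℂ) • E + Eα = Eα - E := by rw [neg_one_smul]; abel
  have ha : a (Eα - E) Fα = ⟪Fα, Fα⟫ := by
    have h := ha_lin (-1) E Eα Fα hFα_mem
    rw [hD] at h
    rw [h, hE_eq Fα hFα_mem, ← h_eq2 Fα hFα_mem]
    ring
  have hγ : γ (Eα - E) = γ Eα - f := by rw [map_sub, hE_trace]
  have h := h_eq1 (Eα - E)
  rw [ha, hγ, inner_sub_left, inner_self_eq_norm_sq_to_K, inner_self_eq_norm_sq_to_K,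
    inner_self_eq_norm_sq_to_K] at h
  have hr := congrArg Complex.re h
  have hre : δ * (‖Eα‖ ^ 2 - (⟪E, Eα⟫ : ℂ).re) + η ^ 2 * ‖γ Eα - f‖ ^ 2 + ‖Fα‖ ^ 2 = 0 := by
    simpa [← Complex.ofReal_pow] using hr
  have hcs : (⟪E, Eα⟫ : ℂ).re ≤ ‖E‖ * ‖Eα‖ :=
    (Complex.re_le_norm _).trans (norm_inner_le_norm E Eα)
  have hlow : -‖E‖ ^ 2 ≤ ‖Eα‖ ^ 2 - (⟪E, Eα⟫ : ℂ).re := by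
    nlinarith [sq_nonneg (‖E‖ - ‖Eα‖), sq_nonneg ‖E‖, sq_nonneg ‖Eα‖]
  have hmul := mul_le_mul_of_nonneg_left hlow hδ.le
  have hs : Real.sqrt δ ^ 2 = δ := Real.sq_sqrt hδ.le
  constructor
  · refine (sq_le_sq₀ (by positivity) (by positivity)).mp ?_
    rw [mul_pow, hs]
    nlinarith [sq_nonneg (η * ‖γ Eα - f‖)]
  · rw [div_mul_eq_mul_div, le_div_iff₀ hη]
    refine (sq_le_sq₀ (by positivity) (by positivity)).mp ?_
    rw [mul_pow, mul_pow, hs]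
    nlinarith [sq_nonneg ‖Fα‖]
end

section
/- Suppose E is the unique element of V satisfying γE = f and a(E, ψ) = ℓ(ψ) for all ψ ∈ M (i.e. any Ẽ ∈ V with γẼ = f and a(Ẽ, ψ) = ℓ(ψ) for all ψ ∈ M equals E). Fix η > 0, and for each δ > 0 let (E_{(δ,η)}, F_{(δ,η)}) be the unique solution of the relaxed QR problem. Then for every sequence (δ_n) of positive reals with δ_n → 0, one has E_{(δ_n,η)} → E and F_{(δ_n,η)} → 0 in the norm of V. (Abstract form of the convergence part of Theorem 4.1.) -/
open ComplexConjugate Filter Topology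

local notation "⟪" x ", " y "⟫" => @inner ℂ _ _ x y

/-- convergence of the relaxed QR method. If `E` is the unique element of
`V` with `γE = f` and `a(E,ψ) = ℓ(ψ)` for all `ψ ∈ M`, `η > 0` is fixed, and
`(E_{(δ,η)}, F_{(δ,η)})` solves the relaxed QR problem for each `δ > 0`, then
`E_{(δₙ,η)} → E` and `F_{(δₙ,η)} → 0` in `V` for any positive sequence `δₙ → 0`. -/
theorem relaxed_qr_convergence
    {V L : Type*} [NormedAddCommGroup V] [InnerProductSpace ℂ V] [CompleteSpace V]
    [NormedAddCommGroup L] [InnerProductSpace ℂ L] [CompleteSpace L]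
    (M : Submodule ℂ V) (hM : IsClosed (M : Set V))
    (a : V → V → ℂ)
    (ha_lin : ∀ (c : ℂ) (u u' v : V), v ∈ M → a (c • u + u') v = c * a u v + a u' v)
    (ha_conj : ∀ (c : ℂ) (u v v' : V), v ∈ M → v' ∈ M →
      a u (c • v + v') = conj c * a u v + a u v')
    (ha_bdd : ∃ C : ℝ, ∀ (u v : V), v ∈ M → ‖a u v‖ ≤ C * ‖u‖ * ‖v‖)
    (γ : V →L[ℂ] L) (f : L)
    (ℓ : V → ℂ)
    (hℓ_conj : ∀ (c : ℂ) (v w : V), v ∈ M → w ∈ M → ℓ (c • v + w) = conj c * ℓ v + ℓ w)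
    (hℓ_bdd : ∃ C : ℝ, ∀ v ∈ M, ‖ℓ v‖ ≤ C * ‖v‖)
    (E : V) (hE_trace : γ E = f) (hE_eq : ∀ ψ ∈ M, a E ψ = ℓ ψ)
    (hE_unique : ∀ E' : V, γ E' = f → (∀ ψ ∈ M, a E' ψ = ℓ ψ) → E' = E)
    (η : ℝ) (hη : 0 < η)
    (sol : ℝ → V × V)
    (hsol : ∀ δ : ℝ, 0 < δ →
      (sol δ).2 ∈ M ∧
      (∀ φ : V, (δ : ℂ) * ⟪φ, (sol δ).1⟫ + (η : ℂ) ^ 2 * ⟪γ φ, γ (sol δ).1 - f⟫ +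
        conj (a φ (sol δ).2) = 0) ∧
      (∀ ψ ∈ M, a (sol δ).1 ψ - ⟪ψ, (sol δ).2⟫ = ℓ ψ))
    (δn : ℕ → ℝ) (hδn_pos : ∀ n, 0 < δn n)
    (hδn_lim : Tendsto δn atTop (𝓝 0)) :
    Tendsto (fun n => (sol (δn n)).1) atTop (𝓝 E) ∧
    Tendsto (fun n => (sol (δn n)).2) atTop (𝓝 (0 : V)) := by
  have hlin_sub : ∀ u v ψ : V, ψ ∈ M → a (u - v) ψ = a u ψ - a v ψ := by
    intro u v ψ hψ
    have := ha_lin (-1) v u ψ hψ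
    rw [show u - v = (-1 : ℂ) • v + u by simp; abel, this]; ring
  have ha0 : ∀ ψ ∈ M, a 0 ψ = 0 := by
    intro ψ hψ
    have := hlin_sub 0 0 ψ hψ
    simpa using this
  set e : ℕ → V := fun n => (sol (δn n)).1 - E with he
  set F : ℕ → V := fun n => (sol (δn n)).2 with hF
  have hFM : ∀ n, F n ∈ M := fun n => (hsol _ (hδn_pos n)).1
  have hae : ∀ n, ∀ ψ ∈ M, a (e n) ψ = ⟪ψ, F n⟫ := by
    intro n ψ hψ
    have h := (hsol _ (hδn_pos n)).2.2 ψ hψ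
    rw [he]
    simp only
    rw [hlin_sub _ _ _ hψ, hE_eq ψ hψ, ← h]
    simp [hF]
  have key : ∀ n, δn n * (‖e n‖ ^ 2 + (⟪e n, E⟫).re) + η ^ 2 * ‖γ (e n)‖ ^ 2 + ‖F n‖ ^ 2 = 0 := by
    intro n
    have h := (hsol _ (hδn_pos n)).2.1 (e n)
    have h1 : (sol (δn n)).1 = e n + E := by simp [he]
    have h2 : γ (sol (δn n)).1 - f = γ (e n) := by rw [h1, map_add, hE_trace]; simp
    have h3 : a (e n) (sol (δn n)).2 = ⟪F n, F n⟫ := hae n _ (hFM n)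
    rw [h2, h3, h1, inner_add_right, inner_self_eq_norm_sq_to_K, inner_self_eq_norm_sq_to_K,
      inner_self_eq_norm_sq_to_K] at h
    have h4 := congrArg Complex.re h
    simp only [Complex.coe_algebraMap, ← Complex.ofReal_pow, map_pow, Complex.conj_ofReal,
      Complex.add_re, Complex.re_ofReal_mul, Complex.ofReal_re, Complex.zero_re] at h4
    simpa using h4
  have hre : ∀ n, -(⟪e n, E⟫).re ≤ ‖⟪e n, E⟫‖ := fun n =>
    (neg_le_abs _).trans (Complex.abs_re_le_norm _)
  have hcs : ∀ n, ‖⟪e n, E⟫‖ ≤ ‖e n‖ * ‖E‖ := fun n => norm_inner_le_norm _ _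
  have hsq : ∀ n, ‖e n‖ ^ 2 ≤ ‖⟪e n, E⟫‖ := by
    intro n
    have h0 : 0 ≤ η ^ 2 * ‖γ (e n)‖ ^ 2 + ‖F n‖ ^ 2 := by positivity
    have h1 : δn n * (‖e n‖ ^ 2 + (⟪e n, E⟫).re) ≤ 0 := by linarith [key n]
    have h2 : ‖e n‖ ^ 2 + (⟪e n, E⟫).re ≤ 0 := nonpos_of_mul_nonpos_right h1 (hδn_pos n)
    linarith [hre n]
  have hebd : ∀ n, ‖e n‖ ≤ ‖E‖ := by
    intro n
    by_contra! hlt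
    have := (hsq n).trans (hcs n)
    nlinarith [norm_nonneg E, norm_nonneg (e n)]
  have hbd : ∀ n, η ^ 2 * ‖γ (e n)‖ ^ 2 + ‖F n‖ ^ 2 ≤ δn n * ‖E‖ ^ 2 := by
    intro n
    have h1 : -(⟪e n, E⟫).re ≤ ‖E‖ ^ 2 := by
      have := mul_le_mul_of_nonneg_right (hebd n) (norm_nonneg E)
      nlinarith [hre n, hcs n]
    have h2 : δn n * (-(‖e n‖ ^ 2 + (⟪e n, E⟫).re)) ≤ δn n * ‖E‖ ^ 2 :=
      mul_le_mul_of_nonneg_left (by nlinarith [sq_nonneg ‖e n‖]) (hδn_pos n).le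
    linarith [key n]
  have hlim0 : Tendsto (fun n => δn n * ‖E‖ ^ 2) atTop (𝓝 0) := by
    simpa using hδn_lim.mul_const (‖E‖ ^ 2)
  have sqlim : ∀ x : ℕ → ℝ, Tendsto (fun n => (x n) ^ 2) atTop (𝓝 0) → Tendsto x atTop (𝓝 0) := by
    intro x hx
    have := hx.sqrt
    simp only [Real.sqrt_sq_eq_abs, Real.sqrt_zero] at this
    exact (tendsto_zero_iff_abs_tendsto_zero _).2 this
  have hFlim : Tendsto F atTop (𝓝 0) := by
    refine tendsto_zero_iff_norm_tendsto_zero.2 (sqlim _ ?_)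
    refine squeeze_zero (fun n => by positivity) (fun n => ?_) hlim0
    have : 0 ≤ η ^ 2 * ‖γ (e n)‖ ^ 2 := by positivity
    linarith [hbd n]
  have hγlim : Tendsto (fun n => γ (e n)) atTop (𝓝 0) := by
    refine tendsto_zero_iff_norm_tendsto_zero.2 (sqlim _ ?_)
    have hl : Tendsto (fun n => (δn n * ‖E‖ ^ 2) / η ^ 2) atTop (𝓝 0) := by
      simpa using hlim0.div_const (η ^ 2)
    refine squeeze_zero (fun n => by positivity) (fun n => ?_) hl
    rw [le_div_iff₀ (by positivity)]
    nlinarith [hbd n, sq_nonneg ‖F n‖]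
  let S : Submodule ℂ V :=
    { carrier := {w | Tendsto (fun n => ⟪e n, w⟫) atTop (𝓝 0)}
      zero_mem' := by simp
      add_mem' := by
        intro x y hx hy
        simp only [Set.mem_setOf_eq, inner_add_right] at *
        simpa using hx.add hy
      smul_mem' := by
        intro c x hx
        simp only [Set.mem_setOf_eq, inner_smul_right] at *
        simpa using hx.const_mul c }
  have hSmem : ∀ w, w ∈ S ↔ Tendsto (fun n => ⟪e n, w⟫) atTop (𝓝 0) := fun w => Iff.rfl
  have hSperp : Sᗮ = ⊥ := by
    rw [Submodule.eq_bot_iff]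
    intro u hu
    rw [Submodule.mem_orthogonal] at hu
    have hγu : γ u = 0 := by
      have hm : ContinuousLinearMap.adjoint γ (γ u) ∈ S := by
        rw [hSmem]
        simp only [ContinuousLinearMap.adjoint_inner_right]
        simpa using hγlim.inner (𝕜 := ℂ) (tendsto_const_nhds (x := γ u))
      have := hu _ hm
      rw [ContinuousLinearMap.adjoint_inner_left] at this
      exact inner_self_eq_zero.1 this
    have hau : ∀ ψ ∈ M, a u ψ = 0 := by
      intro ψ hψ
      obtain ⟨C, hC⟩ := ha_bdd
      let A : V →ₗ[ℂ] ℂ :=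
        { toFun := fun v => a v ψ
          map_add' := by
            intro x y
            simpa using ha_lin 1 x y ψ hψ
          map_smul' := by
            intro c x
            simpa [ha0 ψ hψ] using ha_lin c x 0 ψ hψ }
      let A' : V →L[ℂ] ℂ := A.mkContinuous (C * ‖ψ‖) (by
        intro x
        have := hC x ψ hψ
        calc ‖A x‖ ≤ C * ‖x‖ * ‖ψ‖ := this
          _ = C * ‖ψ‖ * ‖x‖ := by ring)
      have hw : ∀ v, ⟪(InnerProductSpace.toDual ℂ V).symm A', v⟫ = a v ψ := by
        intro v
        rw [InnerProductSpace.toDual_symm_apply]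
        rfl
      have hm : (InnerProductSpace.toDual ℂ V).symm A' ∈ S := by
        rw [hSmem]
        have h1 : ∀ n, ⟪e n, (InnerProductSpace.toDual ℂ V).symm A'⟫ = ⟪F n, ψ⟫ := by
          intro n
          rw [← inner_conj_symm, hw, hae n ψ hψ, inner_conj_symm]
        simp only [h1]
        simpa using hFlim.inner (𝕜 := ℂ) (tendsto_const_nhds (x := ψ))
      rw [← hw]
      exact hu _ hm
    have := hE_unique (u + E) (by rw [map_add, hγu, hE_trace, zero_add]) (by
      intro ψ hψ
      have := ha_lin 1 u E ψ hψ
      rw [one_smul] at this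
      rw [this, hau ψ hψ, hE_eq ψ hψ]; simp)
    simpa using this
  have hSE : Tendsto (fun n => ⟪e n, E⟫) atTop (𝓝 0) := by
    have htop := (Submodule.topologicalClosure_eq_top_iff (K := S)).2 hSperp
    have hcl : E ∈ closure (S : Set V) := by
      rw [← Submodule.topologicalClosure_coe, htop]; trivial
    rw [Metric.tendsto_atTop]
    intro ε hε
    obtain ⟨w, hwS, hwE⟩ := Metric.mem_closure_iff.1 hcl (ε / (2 * (‖E‖ + 1))) (by positivity)
    obtain ⟨N, hN⟩ := Metric.tendsto_atTop.1 ((hSmem w).1 hwS) (ε / 2) (by positivity)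
    refine ⟨N, fun n hn => ?_⟩
    have h1 := hN n hn
    rw [dist_zero_right] at h1 ⊢
    rw [dist_eq_norm] at hwE
    have h2 : ⟪e n, E⟫ = ⟪e n, w⟫ + ⟪e n, E - w⟫ := by rw [← inner_add_right]; simp
    have h3 : ‖⟪e n, E - w⟫‖ ≤ ‖e n‖ * ‖E - w‖ := norm_inner_le_norm _ _
    have h4 : ‖e n‖ * ‖E - w‖ ≤ (‖E‖ + 1) * (ε / (2 * (‖E‖ + 1))) :=
      mul_le_mul (by linarith [hebd n]) hwE.le (norm_nonneg _) (by positivity)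
    have h5 : (‖E‖ + 1) * (ε / (2 * (‖E‖ + 1))) = ε / 2 := by
      have : ‖E‖ + 1 ≠ 0 := by positivity
      field_simp
    have h6 := norm_add_le ⟪e n, w⟫ ⟪e n, E - w⟫
    rw [h2]
    linarith
  refine ⟨?_, hFlim⟩
  have helim : Tendsto e atTop (𝓝 0) := by
    refine tendsto_zero_iff_norm_tendsto_zero.2 (sqlim _ ?_)
    exact squeeze_zero (fun n => by positivity) hsq (by simpa using hSE.norm)
  simpa [he] using helim.add_const E
end

section
/- For every δ > 0, ν > 0 and η > 0, the RR-QR problem admits exactly one solution: there exists a unique pair (E_β, F_β) ∈ W × M such that δ p(E_β, φ) + ν⟨γ₁E_β, γ₁φ⟩_{L₁} + η²⟨γ₀E_β − f, γ₀φ⟩_{L₀} + conj(a(φ, F_β)) = 0 for all φ ∈ W and a(E_β, ψ) − ⟨F_β, ψ⟩_W = ℓ(ψ) for all ψ ∈ M. Moreover, the associated block form is coercive with constant min(δ, ν, 1): for all u ∈ W, v ∈ M, Re(δ p(u,u) + ν‖γ₁u‖_{L₁}² + η²‖γ₀u‖_{L₀}² + ‖v‖_W²) ≥ min(δ,ν,1)(‖u‖_W²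 + ‖v‖_W²) − η²·0, i.e. δ p(u,u) + ν‖γ₁u‖_{L₁}² + ‖v‖_W² ≥ min(δ,ν,1)(‖u‖_W² + ‖v‖_W²). (Abstract form of the well-posedness part of Theorem 4.2.) -/
open ComplexConjugate

local notation "⟪" x ", " y "⟫" => @inner ℂ _ _ x y

theorem exists_riesz_op {W : Type*} [NormedAddCommGroup W] [InnerProductSpace ℂ W]
    [CompleteSpace W] (M : Submodule ℂ W) [CompleteSpace M]
    (a : W → W → ℂ)
    (ha_lin : ∀ (c : ℂ) (u u' v : W), v ∈ M → a (c • u + u') v = c * a u v + a u' v)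
    (ha_conj : ∀ (c : ℂ) (u v v' : W), v ∈ M → v' ∈ M →
      a u (c • v + v') = conj c * a u v + a u v')
    (ha_bdd : ∃ C : ℝ, ∀ (u v : W), v ∈ M → ‖a u v‖ ≤ C * ‖u‖ * ‖v‖) :
    ∃ A : W →L[ℂ] M, ∀ (u : W) (ψ : M), a u ψ = ⟪ψ, A u⟫ := by
  obtain ⟨C, hC⟩ := ha_bdd
  have z1 : ∀ v ∈ M, a 0 v = 0 := fun v hv => by
    have := ha_lin 1 0 0 v hv
    simpa using this
  have z2 : ∀ u, a u 0 = 0 := fun u => by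
    have := ha_conj 1 u 0 0 M.zero_mem M.zero_mem
    simpa using this
  let B0 : M →ₛₗ[starRingEnd ℂ] W →ₗ[ℂ] ℂ :=
    LinearMap.mk₂'ₛₗ (starRingEnd ℂ) (RingHom.id ℂ) (fun ψ u => a u (ψ : W))
      (fun m n u => by simpa using ha_conj 1 u m n m.2 n.2)
      (fun c m u => by simpa [z2] using ha_conj c u m 0 m.2 M.zero_mem)
      (fun m u v => by simpa using ha_lin 1 u v m m.2)
      (fun c m u => by simpa [z1 m m.2] using ha_lin c u 0 m m.2)
  let B : M →L⋆[ℂ] W →L[ℂ] ℂ := B0.mkContinuous₂ C (fun ψ u => by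
    have := hC u ψ ψ.2
    calc ‖a u ψ‖ ≤ C * ‖u‖ * ‖(ψ : W)‖ := this
      _ = C * ‖ψ‖ * ‖u‖ := by rw [Submodule.coe_norm]; ring)
  let S : M →L[ℂ] W :=
    (InnerProductSpace.toDual ℂ W).symm.toContinuousLinearEquiv.toContinuousLinearMap.comp B
  refine ⟨S.adjoint, fun u ψ => ?_⟩
  rw [ContinuousLinearMap.adjoint_inner_right]
  have h : ⟪S ψ, u⟫ = B ψ u := by simp [S]
  rw [h]
  rfl

/-- for every `δ, ν, η > 0`, the RR-QR problem admits exactly one solution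
`(E_β, F_β) ∈ W × M`; moreover the associated block form is coercive with constant
`min(δ, ν, 1)`: `δ p(u,u) + ν‖γ₁u‖² + ‖v‖² ≥ min(δ,ν,1)(‖u‖² + ‖v‖²)` for all `u ∈ W`,
`v ∈ M`. (Paper inner products `⟨u,φ⟩` are linear in the first argument, hence `⟪φ, u⟫`
in Mathlib's convention; `p(u,u)` is real, and we use its real part.) -/
theorem rrqr_wellposed_and_coercive
    {W L₀ L₁ : Type*} [NormedAddCommGroup W] [InnerProductSpace ℂ W] [CompleteSpace W]
    [NormedAddCommGroup L₀] [InnerProductSpace ℂ L₀] [CompleteSpace L₀]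
    [NormedAddCommGroup L₁] [InnerProductSpace ℂ L₁] [CompleteSpace L₁]
    (γ₀ : W →L[ℂ] L₀) (γ₁ : W →L[ℂ] L₁)
    (p : W → W → ℂ)
    (hp_lin : ∀ (c : ℂ) (u u' v : W), p (c • u + u') v = c * p u v + p u' v)
    (hp_herm : ∀ u v : W, p v u = conj (p u v))
    (hp_pos : ∀ u : W, 0 ≤ (p u u).re)
    (hp_bdd : ∃ C : ℝ, ∀ u v : W, ‖p u v‖ ≤ C * ‖u‖ * ‖v‖)
    (hp_compat : ∀ u v : W, (⟪v, u⟫ : ℂ) = p u v + ⟪γ₁ v, γ₁ u⟫)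
    (M : Submodule ℂ W) (hM : IsClosed (M : Set W))
    (a : W → W → ℂ)
    (ha_lin : ∀ (c : ℂ) (u u' v : W), v ∈ M → a (c • u + u') v = c * a u v + a u' v)
    (ha_conj : ∀ (c : ℂ) (u v v' : W), v ∈ M → v' ∈ M →
      a u (c • v + v') = conj c * a u v + a u v')
    (ha_bdd : ∃ C : ℝ, ∀ (u v : W), v ∈ M → ‖a u v‖ ≤ C * ‖u‖ * ‖v‖)
    (f : L₀)
    (ℓ : W → ℂ)
    (hℓ_conj : ∀ (c : ℂ) (v w : W), v ∈ M → w ∈ M → ℓ (c • v + w) = conj c * ℓ v + ℓ w)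
    (hℓ_bdd : ∃ C : ℝ, ∀ v ∈ M, ‖ℓ v‖ ≤ C * ‖v‖)
    (δ ν η : ℝ) (hδ : 0 < δ) (hν : 0 < ν) (hη : 0 < η) :
    (∃! q : W × W, q.2 ∈ M ∧
      (∀ φ : W, (δ : ℂ) * p q.1 φ + (ν : ℂ) * ⟪γ₁ φ, γ₁ q.1⟫ +
        (η : ℂ) ^ 2 * ⟪γ₀ φ, γ₀ q.1 - f⟫ + conj (a φ q.2) = 0) ∧
      (∀ ψ ∈ M, a q.1 ψ - ⟪ψ, q.2⟫ = ℓ ψ)) ∧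
    (∀ (u v : W), v ∈ M →
      min δ (min ν 1) * (‖u‖ ^ 2 + ‖v‖ ^ 2) ≤
        δ * (p u u).re + ν * ‖γ₁ u‖ ^ 2 + ‖v‖ ^ 2) := by
  have hcoer : ∀ (u v : W),
      min δ (min ν 1) * (‖u‖ ^ 2 + ‖v‖ ^ 2) ≤
        δ * (p u u).re + ν * ‖γ₁ u‖ ^ 2 + ‖v‖ ^ 2 := by
    intro u v
    have h1 : ‖u‖ ^ 2 = (p u u).re + ‖γ₁ u‖ ^ 2 := by
      have := congrArg Complex.re (hp_compat u u)
      rw [Complex.add_re] at this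
      rw [@norm_sq_eq_re_inner ℂ, @norm_sq_eq_re_inner ℂ]
      exact this
    have m1 : min δ (min ν 1) ≤ δ := min_le_left _ _
    have m2 : min δ (min ν 1) ≤ ν := (min_le_right _ _).trans (min_le_left _ _)
    have m3 : min δ (min ν 1) ≤ 1 := (min_le_right _ _).trans (min_le_right _ _)
    rw [h1]
    nlinarith [mul_le_mul_of_nonneg_right m1 (hp_pos u),
      mul_le_mul_of_nonneg_right m2 (sq_nonneg ‖γ₁ u‖),
      mul_le_mul_of_nonneg_right m3 (sq_nonneg ‖v‖)]
  refine ⟨?_, fun u v _ => hcoer u v⟩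
  have : CompleteSpace M := hM.completeSpace_coe
  obtain ⟨A, hA⟩ := exists_riesz_op M a ha_lin ha_conj ha_bdd
  obtain ⟨l, hl⟩ : ∃ l : M, ∀ ψ : M, ℓ ψ = ⟪ψ, l⟫ := by
    obtain ⟨C, hC⟩ := hℓ_bdd
    have z : ℓ 0 = 0 := by simpa using hℓ_conj 1 0 0 M.zero_mem M.zero_mem
    let g0 : M →ₗ[ℂ] ℂ :=
      { toFun := fun ψ => conj (ℓ ψ)
        map_add' := fun x y => by
          have := hℓ_conj 1 x y x.2 y.2
          simp only [one_smul, map_one, one_mul] at this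
          simp [this]
        map_smul' := fun c x => by
          have := hℓ_conj c x 0 x.2 M.zero_mem
          simp only [add_zero, z] at this
          simp [this] }
    let g : M →L[ℂ] ℂ := g0.mkContinuous C (fun ψ => by simpa [g0] using hC ψ ψ.2)
    refine ⟨(InnerProductSpace.toDual ℂ M).symm g, fun ψ => ?_⟩
    rw [← inner_conj_symm, InnerProductSpace.toDual_symm_apply]
    simp [g, g0]
  let T : W →L[ℂ] W := (δ : ℂ) • ContinuousLinearMap.id ℂ W +
    ((ν : ℂ) - δ) • (γ₁.adjoint ∘L γ₁) + ((η : ℂ) ^ 2) • (γ₀.adjoint ∘L γ₀) + A.adjoint ∘L A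
  have hT : ∀ u φ : W, ⟪φ, T u⟫ = (δ : ℂ) * p u φ + (ν : ℂ) * ⟪γ₁ φ, γ₁ u⟫ +
      (η : ℂ) ^ 2 * ⟪γ₀ φ, γ₀ u⟫ + ⟪A φ, A u⟫ := by
    intro u φ
    simp only [T, ContinuousLinearMap.add_apply, ContinuousLinearMap.smul_apply,
      ContinuousLinearMap.comp_apply, ContinuousLinearMap.id_apply, inner_add_right,
      inner_smul_right, ContinuousLinearMap.adjoint_inner_right, hp_compat u φ]
    ring
  have hm : 0 < min δ (min ν 1) := lt_min hδ (lt_min hν one_pos)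
  have hU : IsUnit T := by
    refine ContinuousLinearMap.isUnit_of_forall_le_norm_inner_map T
      (c := ⟨min δ (min ν 1), hm.le⟩) hm (fun x => ?_)
    rw [norm_inner_symm]
    refine le_trans ?_ (Complex.re_le_norm _)
    have e1 : ⟪γ₁ x, γ₁ x⟫ = ((‖γ₁ x‖ ^ 2 : ℝ) : ℂ) := by
      rw [inner_self_eq_norm_sq_to_K]; simp
    have e0 : ⟪γ₀ x, γ₀ x⟫ = ((‖γ₀ x‖ ^ 2 : ℝ) : ℂ) := by
      rw [inner_self_eq_norm_sq_to_K]; simp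
    have e2 : ⟪A x, A x⟫ = ((‖A x‖ ^ 2 : ℝ) : ℂ) := by
      rw [inner_self_eq_norm_sq_to_K]; simp
    have e3 : ((η : ℂ) ^ 2) = ((η ^ 2 : ℝ) : ℂ) := by simp
    rw [hT, e1, e0, e2, e3]
    simp only [Complex.add_re, Complex.re_ofReal_mul, Complex.ofReal_re]
    have := hcoer x 0
    simp only [norm_zero] at this
    change ‖x‖ ^ 2 * min δ (min ν 1) ≤ _
    nlinarith [sq_nonneg ‖A x‖, mul_nonneg (sq_nonneg η) (sq_nonneg ‖γ₀ x‖)]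
  have hbij : Function.Bijective T := ContinuousLinearMap.isUnit_iff_bijective.mp hU
  let r : W := ((η : ℂ) ^ 2) • γ₀.adjoint f + A.adjoint l
  have key : ∀ u : W, (∀ φ : W, (δ : ℂ) * p u φ + (ν : ℂ) * ⟪γ₁ φ, γ₁ u⟫ +
        (η : ℂ) ^ 2 * ⟪γ₀ φ, γ₀ u - f⟫ + conj (a φ (A u - l : M)) = 0) ↔ T u = r := by
    intro u
    have e : ∀ φ : W, (δ : ℂ) * p u φ + (ν : ℂ) * ⟪γ₁ φ, γ₁ u⟫ +
        (η : ℂ) ^ 2 * ⟪γ₀ φ, γ₀ u - f⟫ + conj (a φ (A u - l : M)) = ⟪φ, T u⟫ - ⟪φ, r⟫ := by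
      intro φ
      rw [hT, hA, inner_conj_symm]
      simp only [r, inner_sub_right, inner_add_right, inner_smul_right,
        ContinuousLinearMap.adjoint_inner_right]
      ring
    simp only [e, sub_eq_zero]
    exact ⟨fun h => ext_inner_left ℂ h, fun h φ => by rw [h]⟩
  have key2 : ∀ (u : W) (F : M), (∀ ψ ∈ M, a u ψ - ⟪ψ, (F : W)⟫ = ℓ ψ) ↔ F = A u - l := by
    intro u F
    constructor
    · intro h
      refine ext_inner_left ℂ (fun ψ => ?_)
      have := h ψ ψ.2
      rw [hA, hl, ← Submodule.coe_inner] at this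
      rw [inner_sub_right, ← this]
      ring
    · rintro rfl ψ hψ
      have h1 := hA u ⟨ψ, hψ⟩
      have h2 := hl ⟨ψ, hψ⟩
      have h3 : ⟪ψ, ((A u - l : M) : W)⟫ = ⟪(⟨ψ, hψ⟩ : M), A u - l⟫ := rfl
      rw [h3, inner_sub_right, ← h1, ← h2]
      ring
  obtain ⟨E, hE⟩ := hbij.2 r
  refine ⟨(E, ((A E - l : M) : W)), ⟨(A E - l).2, (key E).2 hE, (key2 E _).2 rfl⟩, ?_⟩
  rintro ⟨u, F⟩ ⟨hF, h1, h2⟩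
  have hF' := (key2 u ⟨F, hF⟩).1 h2
  have hF2 : F = ((A u - l : M) : W) := congrArg Subtype.val hF'
  subst hF2
  have hu : u = E := hbij.1 (((key u).1 h1).trans hE.symm)
  rw [hu]
end

section
/- Suppose there exists E ∈ W with γ₀E = f and a(E, ψ) = ℓ(ψ) for all ψ ∈ M. Let δ, ν, η > 0 and let (E_β, F_β) ∈ W × M be a solution of the RR-QR problem. Then the orthogonality relation δ p(E_β, E_β − E) + ν⟨γ₁E_β, γ₁(E_β − E)⟩_{L₁} + η²‖γ₀E_β − f‖_{L₀}² + ‖F_β‖_W² = 0 holds, and consequently ‖E_β‖_W ≤ (max(δ,ν)/min(δ,ν)) ‖E‖_W. -/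
open ComplexConjugate

local notation "⟪" x ", " y "⟫" => @inner ℂ _ _ x y

/-- orthogonality relation for the RR-QR problem,
`δ p(E_β, E_β − E) + ν⟨γ₁E_β, γ₁(E_β − E)⟩ + η²‖γ₀E_β − f‖² + ‖F_β‖² = 0`,
and the resulting bound `‖E_β‖_W ≤ (max(δ,ν)/min(δ,ν)) ‖E‖_W`. -/
theorem rrqr_orthogonality
    {W L₀ L₁ : Type*} [NormedAddCommGroup W] [InnerProductSpace ℂ W] [CompleteSpace W]
    [NormedAddCommGroup L₀] [InnerProductSpace ℂ L₀] [CompleteSpace L₀]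
    [NormedAddCommGroup L₁] [InnerProductSpace ℂ L₁] [CompleteSpace L₁]
    (γ₀ : W →L[ℂ] L₀) (γ₁ : W →L[ℂ] L₁)
    (p : W → W → ℂ)
    (hp_lin : ∀ (c : ℂ) (u u' v : W), p (c • u + u') v = c * p u v + p u' v)
    (hp_herm : ∀ u v : W, p v u = conj (p u v))
    (hp_pos : ∀ u : W, 0 ≤ (p u u).re)
    (hp_bdd : ∃ C : ℝ, ∀ u v : W, ‖p u v‖ ≤ C * ‖u‖ * ‖v‖)
    (hp_compat : ∀ u v : W, (⟪v, u⟫ : ℂ) = p u v + ⟪γ₁ v, γ₁ u⟫)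
    (M : Submodule ℂ W) (hM : IsClosed (M : Set W))
    (a : W → W → ℂ)
    (ha_lin : ∀ (c : ℂ) (u u' v : W), v ∈ M → a (c • u + u') v = c * a u v + a u' v)
    (ha_conj : ∀ (c : ℂ) (u v v' : W), v ∈ M → v' ∈ M →
      a u (c • v + v') = conj c * a u v + a u v')
    (ha_bdd : ∃ C : ℝ, ∀ (u v : W), v ∈ M → ‖a u v‖ ≤ C * ‖u‖ * ‖v‖)
    (f : L₀)
    (ℓ : W → ℂ)
    (hℓ_conj : ∀ (c : ℂ) (v w : W), v ∈ M → w ∈ M → ℓ (c • v + w) = conj c * ℓ v + ℓ w)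
    (hℓ_bdd : ∃ C : ℝ, ∀ v ∈ M, ‖ℓ v‖ ≤ C * ‖v‖)
    (E : W) (hE_trace : γ₀ E = f) (hE_eq : ∀ ψ ∈ M, a E ψ = ℓ ψ)
    (δ ν η : ℝ) (hδ : 0 < δ) (hν : 0 < ν) (hη : 0 < η)
    (Eβ Fβ : W) (hFβ_mem : Fβ ∈ M)
    (h_eq1 : ∀ φ : W, (δ : ℂ) * p Eβ φ + (ν : ℂ) * ⟪γ₁ φ, γ₁ Eβ⟫ +
      (η : ℂ) ^ 2 * ⟪γ₀ φ, γ₀ Eβ - f⟫ + conj (a φ Fβ) = 0)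
    (h_eq2 : ∀ ψ ∈ M, a Eβ ψ - ⟪ψ, Fβ⟫ = ℓ ψ) :
    (δ : ℂ) * p Eβ (Eβ - E) + (ν : ℂ) * ⟪γ₁ (Eβ - E), γ₁ Eβ⟫ +
      ((η ^ 2 * ‖γ₀ Eβ - f‖ ^ 2 : ℝ) : ℂ) + ((‖Fβ‖ ^ 2 : ℝ) : ℂ) = 0 ∧
    ‖Eβ‖ ≤ (max δ ν / min δ ν) * ‖E‖ := by
  have hp : ∀ u v : W, p u v = ⟪v, u⟫ - ⟪γ₁ v, γ₁ u⟫ := fun u v => by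
    rw [hp_compat u v]; ring
  have ha : a (Eβ - E) Fβ = ⟪Fβ, Fβ⟫ := by
    have h := ha_lin (-1) E Eβ Fβ hFβ_mem
    have h2 := h_eq2 Fβ hFβ_mem
    have h3 := hE_eq Fβ hFβ_mem
    have h4 : (-1 : ℂ) • E + Eβ = Eβ - E := by rw [neg_one_smul]; abel
    rw [h4] at h
    rw [h]
    linear_combination h2 - h3
  have key : (δ : ℂ) * p Eβ (Eβ - E) + (ν : ℂ) * ⟪γ₁ (Eβ - E), γ₁ Eβ⟫ +
      ((η ^ 2 * ‖γ₀ Eβ - f‖ ^ 2 : ℝ) : ℂ) + ((‖Fβ‖ ^ 2 : ℝ) : ℂ) = 0 := by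
    have h := h_eq1 (Eβ - E)
    rw [ha, inner_conj_symm, map_sub γ₀, hE_trace, inner_self_eq_norm_sq_to_K,
      inner_self_eq_norm_sq_to_K] at h
    push_cast
    exact h
  refine ⟨key, ?_⟩
  have hre := congrArg Complex.re key
  have hQ : (p (Eβ - E) (Eβ - E)).re = 2 * (p Eβ (Eβ - E)).re - (p Eβ Eβ).re + (p E E).re := by
    have e1 := congrArg Complex.re (inner_conj_symm (𝕜 := ℂ) Eβ E)
    have e2 := congrArg Complex.re (inner_conj_symm (𝕜 := ℂ) (γ₁ Eβ) (γ₁ E))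
    rw [Complex.conj_re] at e1 e2
    simp only [hp, map_sub, inner_sub_left, inner_sub_right, Complex.sub_re]
    linarith
  have hG : (⟪γ₁ (Eβ - E), γ₁ (Eβ - E)⟫ : ℂ).re
      = 2 * (⟪γ₁ (Eβ - E), γ₁ Eβ⟫ : ℂ).re - (⟪γ₁ Eβ, γ₁ Eβ⟫ : ℂ).re
        + (⟪γ₁ E, γ₁ E⟫ : ℂ).re := by
    have e2 := congrArg Complex.re (inner_conj_symm (𝕜 := ℂ) (γ₁ Eβ) (γ₁ E))
    rw [Complex.conj_re] at e2
    simp only [map_sub, inner_sub_left, inner_sub_right, Complex.sub_re]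
    linarith
  have gpos : ∀ u : W, 0 ≤ (⟪γ₁ u, γ₁ u⟫ : ℂ).re := fun u =>
    inner_self_nonneg (𝕜 := ℂ) (x := γ₁ u)
  have hn : ∀ u : W, ‖u‖ ^ 2 = (p u u).re + (⟪γ₁ u, γ₁ u⟫ : ℂ).re := fun u => by
    have h := congrArg Complex.re (hp_compat u u)
    rw [Complex.add_re] at h
    rw [← h]
    exact (inner_self_eq_norm_sq (𝕜 := ℂ) u).symm
  simp only [Complex.add_re, Complex.re_ofReal_mul, Complex.ofReal_re, Complex.zero_re] at hre
  have q0 := mul_nonneg hδ.le (hp_pos (Eβ - E))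
  have g0 := mul_nonneg hν.le (gpos (Eβ - E))
  rw [hQ] at q0
  rw [hG] at g0
  have t0 : 0 ≤ η ^ 2 * ‖γ₀ Eβ - f‖ ^ 2 := by positivity
  have t1 : 0 ≤ ‖Fβ‖ ^ 2 := by positivity
  have main : δ * (p Eβ Eβ).re + ν * (⟪γ₁ Eβ, γ₁ Eβ⟫ : ℂ).re
      ≤ δ * (p E E).re + ν * (⟪γ₁ E, γ₁ E⟫ : ℂ).re := by nlinarith
  have m0 : 0 < min δ ν := lt_min hδ hν
  have mM : min δ ν ≤ max δ ν := min_le_max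
  have a1 := mul_le_mul_of_nonneg_right (min_le_left δ ν) (hp_pos Eβ)
  have a2 := mul_le_mul_of_nonneg_right (min_le_right δ ν) (gpos Eβ)
  have a3 := mul_le_mul_of_nonneg_right (le_max_left δ ν) (hp_pos E)
  have a4 := mul_le_mul_of_nonneg_right (le_max_right δ ν) (gpos E)
  have fin : min δ ν * ‖Eβ‖ ^ 2 ≤ max δ ν * ‖E‖ ^ 2 := by
    rw [hn, hn]; linarith
  have r1 : 1 ≤ max δ ν / min δ ν := (one_le_div m0).2 mM
  have f2 : ‖Eβ‖ ^ 2 ≤ (max δ ν / min δ ν) * ‖E‖ ^ 2 := by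
    rw [div_mul_eq_mul_div, le_div_iff₀ m0]; linarith
  refine (abs_le_of_sq_le_sq ?_ (by positivity) |> le_trans (le_abs_self _))
  rw [mul_pow]
  refine f2.trans (mul_le_mul_of_nonneg_right ?_ (by positivity))
  nlinarith
end

section
/- Suppose there exists E ∈ W with γ₀E = f and a(E, ψ) = ℓ(ψ) for all ψ ∈ M. Let δ, ν, η > 0, set C(δ,ν) := max(δ,ν)/min(δ,ν), and let (E_β, F_β) ∈ W × M be a solution of the RR-QR problem. Then ‖F_β‖_W ≤ √(max(δ,ν) C(δ,ν)) · ‖E‖_W and ‖γ₀E_β − f‖_{L₀} ≤ (√(max(δ,ν) C(δ,ν)) / η) · ‖E‖_W. (Estimates (4.13) and (4.14) of Theorem 4.2.) -/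
open ComplexConjugate

local notation "⟪" x ", " y "⟫" => @inner ℂ _ _ x y

/-- estimates (4.13) and (4.14) of Theorem 4.2:
`‖F_β‖_W ≤ √(max(δ,ν)C(δ,ν)) ‖E‖_W` and
`‖γ₀E_β − f‖ ≤ (√(max(δ,ν)C(δ,ν))/η) ‖E‖_W`, where `C(δ,ν) = max(δ,ν)/min(δ,ν)`. -/
theorem rrqr_estimates
    {W L₀ L₁ : Type*} [NormedAddCommGroup W] [InnerProductSpace ℂ W] [CompleteSpace W]
    [NormedAddCommGroup L₀] [InnerProductSpace ℂ L₀] [CompleteSpace L₀]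
    [NormedAddCommGroup L₁] [InnerProductSpace ℂ L₁] [CompleteSpace L₁]
    (γ₀ : W →L[ℂ] L₀) (γ₁ : W →L[ℂ] L₁)
    (p : W → W → ℂ)
    (hp_lin : ∀ (c : ℂ) (u u' v : W), p (c • u + u') v = c * p u v + p u' v)
    (hp_herm : ∀ u v : W, p v u = conj (p u v))
    (hp_pos : ∀ u : W, 0 ≤ (p u u).re)
    (hp_bdd : ∃ C : ℝ, ∀ u v : W, ‖p u v‖ ≤ C * ‖u‖ * ‖v‖)
    (hp_compat : ∀ u v : W, (⟪v, u⟫ : ℂ) = p u v + ⟪γ₁ v, γ₁ u⟫)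
    (M : Submodule ℂ W) (hM : IsClosed (M : Set W))
    (a : W → W → ℂ)
    (ha_lin : ∀ (c : ℂ) (u u' v : W), v ∈ M → a (c • u + u') v = c * a u v + a u' v)
    (ha_conj : ∀ (c : ℂ) (u v v' : W), v ∈ M → v' ∈ M →
      a u (c • v + v') = conj c * a u v + a u v')
    (ha_bdd : ∃ C : ℝ, ∀ (u v : W), v ∈ M → ‖a u v‖ ≤ C * ‖u‖ * ‖v‖)
    (f : L₀)
    (ℓ : W → ℂ)
    (hℓ_conj : ∀ (c : ℂ) (v w : W), v ∈ M → w ∈ M → ℓ (c • v + w) = conj c * ℓ v + ℓ w)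
    (hℓ_bdd : ∃ C : ℝ, ∀ v ∈ M, ‖ℓ v‖ ≤ C * ‖v‖)
    (E : W) (hE_trace : γ₀ E = f) (hE_eq : ∀ ψ ∈ M, a E ψ = ℓ ψ)
    (δ ν η : ℝ) (hδ : 0 < δ) (hν : 0 < ν) (hη : 0 < η)
    (Eβ Fβ : W) (hFβ_mem : Fβ ∈ M)
    (h_eq1 : ∀ φ : W, (δ : ℂ) * p Eβ φ + (ν : ℂ) * ⟪γ₁ φ, γ₁ Eβ⟫ +
      (η : ℂ) ^ 2 * ⟪γ₀ φ, γ₀ Eβ - f⟫ + conj (a φ Fβ) = 0)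
    (h_eq2 : ∀ ψ ∈ M, a Eβ ψ - ⟪ψ, Fβ⟫ = ℓ ψ) :
    ‖Fβ‖ ≤ Real.sqrt (max δ ν * (max δ ν / min δ ν)) * ‖E‖ ∧
    ‖γ₀ Eβ - f‖ ≤ (Real.sqrt (max δ ν * (max δ ν / min δ ν)) / η) * ‖E‖ := by
  have hD : Eβ - E = (-1 : ℂ) • E + Eβ := by simp [sub_eq_neg_add]
  have h1 := congrArg Complex.re (h_eq1 (Eβ - E))
  have haD : a (Eβ - E) Fβ = ((‖Fβ‖ ^ 2 : ℝ) : ℂ) := by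
    rw [hD, ha_lin _ _ _ _ hFβ_mem]
    have h2 := h_eq2 Fβ hFβ_mem
    have h3 := hE_eq Fβ hFβ_mem
    have h4 : (⟪Fβ, Fβ⟫ : ℂ) = ((‖Fβ‖ ^ 2 : ℝ) : ℂ) := by
      rw [inner_self_eq_norm_sq_to_K]; simp
    rw [← h4]
    linear_combination h2 - h3
  have hg0 : γ₀ (Eβ - E) = γ₀ Eβ - f := by rw [map_sub, hE_trace]
  have hg : (⟪γ₀ Eβ - f, γ₀ Eβ - f⟫ : ℂ) = ((‖γ₀ Eβ - f‖ ^ 2 : ℝ) : ℂ) := by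
    rw [inner_self_eq_norm_sq_to_K]; simp
  have hη2 : (η : ℂ) ^ 2 = ((η ^ 2 : ℝ) : ℂ) := by simp
  rw [haD, hg0, hg, hη2, Complex.conj_ofReal] at h1
  simp only [Complex.add_re, Complex.re_ofReal_mul, Complex.ofReal_re, Complex.zero_re] at h1
  -- polarization for p
  have hsub : ∀ v, p (Eβ - E) v = p Eβ v - p E v := by
    intro v; rw [hD, hp_lin]; ring
  have hre : ∀ u v, (p u v).re = (p v u).re := by
    intro u v; rw [hp_herm v u, Complex.conj_re]
  have hpD : -(1 / 2) * (p E E).re ≤ (p Eβ (Eβ - E)).re := by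
    have e1 := congrArg Complex.re (hsub (Eβ - E))
    have e2 := congrArg Complex.re (hsub E)
    have e3 := congrArg Complex.re (hsub Eβ)
    simp only [Complex.sub_re] at e1 e2 e3
    have r1 := hre Eβ (Eβ - E)
    have r2 := hre E (Eβ - E)
    have r3 := hre E Eβ
    have q1 := hp_pos Eβ
    have q2 := hp_pos (Eβ - E)
    linarith
  have hgD : -(1 / 2) * ‖γ₁ E‖ ^ 2 ≤ (⟪γ₁ (Eβ - E), γ₁ Eβ⟫ : ℂ).re := by
    have e := @norm_sub_sq ℂ _ _ _ _ (γ₁ (Eβ - E)) (γ₁ Eβ)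
    have e' : γ₁ (Eβ - E) - γ₁ Eβ = - γ₁ E := by rw [map_sub]; abel
    rw [e', norm_neg] at e
    have e2 : RCLike.re (⟪γ₁ (Eβ - E), γ₁ Eβ⟫ : ℂ) = (⟪γ₁ (Eβ - E), γ₁ Eβ⟫ : ℂ).re := rfl
    rw [e2] at e
    nlinarith [sq_nonneg ‖γ₁ (Eβ - E)‖, sq_nonneg ‖γ₁ Eβ‖]
  have hN : ‖E‖ ^ 2 = (p E E).re + ‖γ₁ E‖ ^ 2 := by
    have h := hp_compat E E
    rw [inner_self_eq_norm_sq_to_K, inner_self_eq_norm_sq_to_K] at h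
    have h' := congrArg Complex.re h
    simpa [← Complex.ofReal_pow] using h'
  have hm : 0 < min δ ν := lt_min hδ hν
  have hmax : 0 < max δ ν := lt_max_of_lt_left hδ
  have hK : max δ ν ≤ max δ ν * (max δ ν / min δ ν) := by
    refine le_mul_of_one_le_right hmax.le ?_
    rw [le_div_iff₀ hm, one_mul]
    exact min_le_max
  set K := max δ ν * (max δ ν / min δ ν) with hKdef
  have hK0 : 0 ≤ K := hmax.le.trans hK
  have key : η ^ 2 * ‖γ₀ Eβ - f‖ ^ 2 + ‖Fβ‖ ^ 2 ≤ K * ‖E‖ ^ 2 := by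
    have b1 := mul_le_mul_of_nonneg_left hpD hδ.le
    have b2 := mul_le_mul_of_nonneg_left hgD hν.le
    have b3 := mul_le_mul_of_nonneg_right ((le_max_left δ ν).trans hK) (hp_pos E)
    have b4 := mul_le_mul_of_nonneg_right ((le_max_right δ ν).trans hK) (sq_nonneg ‖γ₁ E‖)
    have b5 := mul_nonneg hK0 (hp_pos E)
    have b6 := mul_nonneg hK0 (sq_nonneg ‖γ₁ E‖)
    rw [hN]
    linarith
  have hs : (Real.sqrt K * ‖E‖) ^ 2 = K * ‖E‖ ^ 2 := by rw [mul_pow, Real.sq_sqrt hK0]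
  have hs0 : 0 ≤ Real.sqrt K * ‖E‖ := by positivity
  constructor
  · refine abs_le_of_sq_le_sq' ?_ hs0 |>.2
    rw [hs]
    have : 0 ≤ η ^ 2 * ‖γ₀ Eβ - f‖ ^ 2 := by positivity
    linarith
  · rw [div_mul_eq_mul_div, le_div_iff₀ hη]
    refine abs_le_of_sq_le_sq' ?_ hs0 |>.2
    rw [hs]
    have : 0 ≤ ‖Fβ‖ ^ 2 := by positivity
    linarith
end

section
/- Suppose E is the unique element of W satisfying γ₀E = f and a(E, ψ) = ℓ(ψ) for all ψ ∈ M (i.e. any Ẽ ∈ W with γ₀Ẽ = f and a(Ẽ, ψ) = ℓ(ψ) for all ψ ∈ M equals E). Fix η > 0, and let (δ_n) and (ν_n) be sequences of positive reals with δ_n → 0 and δ_n/ν_n → 1. For each n let (E_n, F_n) be the unique solution of the RR-QR problem with parameters (δ_n, ν_n, η). Then E_n → E and F_n → 0 in the norm of W. (Abstract form of the convergence part of Theorem 4.2 under the parameter condition ν(δ) = δ + o(δ).) -/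
open ComplexConjugate Filter Topology

local notation "⟪" x ", " y "⟫" => @inner ℂ _ _ x y

/-- convergence of the RR-QR method under the parameter condition
`ν(δ) = δ + o(δ)`. If `E` is the unique element of `W` with `γ₀E = f` and
`a(E,ψ) = ℓ(ψ)` for all `ψ ∈ M`, `η > 0` is fixed, `δₙ, νₙ > 0`, `δₙ → 0`,
`δₙ/νₙ → 1`, and `(Eₙ, Fₙ)` solves the RR-QR problem with parameters `(δₙ, νₙ, η)`,
then `Eₙ → E` and `Fₙ → 0` in the norm of `W`. -/
theorem rrqr_convergence
    {W L₀ L₁ : Type*} [NormedAddCommGroup W] [InnerProductSpace ℂ W] [CompleteSpace W]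
    [NormedAddCommGroup L₀] [InnerProductSpace ℂ L₀] [CompleteSpace L₀]
    [NormedAddCommGroup L₁] [InnerProductSpace ℂ L₁] [CompleteSpace L₁]
    (γ₀ : W →L[ℂ] L₀) (γ₁ : W →L[ℂ] L₁)
    (p : W → W → ℂ)
    (hp_lin : ∀ (c : ℂ) (u u' v : W), p (c • u + u') v = c * p u v + p u' v)
    (hp_herm : ∀ u v : W, p v u = conj (p u v))
    (hp_pos : ∀ u : W, 0 ≤ (p u u).re)
    (hp_bdd : ∃ C : ℝ, ∀ u v : W, ‖p u v‖ ≤ C * ‖u‖ * ‖v‖)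
    (hp_compat : ∀ u v : W, (⟪v, u⟫ : ℂ) = p u v + ⟪γ₁ v, γ₁ u⟫)
    (M : Submodule ℂ W) (hM : IsClosed (M : Set W))
    (a : W → W → ℂ)
    (ha_lin : ∀ (c : ℂ) (u u' v : W), v ∈ M → a (c • u + u') v = c * a u v + a u' v)
    (ha_conj : ∀ (c : ℂ) (u v v' : W), v ∈ M → v' ∈ M →
      a u (c • v + v') = conj c * a u v + a u v')
    (ha_bdd : ∃ C : ℝ, ∀ (u v : W), v ∈ M → ‖a u v‖ ≤ C * ‖u‖ * ‖v‖)
    (f : L₀)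
    (ℓ : W → ℂ)
    (hℓ_conj : ∀ (c : ℂ) (v w : W), v ∈ M → w ∈ M → ℓ (c • v + w) = conj c * ℓ v + ℓ w)
    (hℓ_bdd : ∃ C : ℝ, ∀ v ∈ M, ‖ℓ v‖ ≤ C * ‖v‖)
    (E : W) (hE_trace : γ₀ E = f) (hE_eq : ∀ ψ ∈ M, a E ψ = ℓ ψ)
    (hE_unique : ∀ E' : W, γ₀ E' = f → (∀ ψ ∈ M, a E' ψ = ℓ ψ) → E' = E)
    (η : ℝ) (hη : 0 < η)
    (δn νn : ℕ → ℝ) (hδn_pos : ∀ n, 0 < δn n) (hνn_pos : ∀ n, 0 < νn n)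
    (hδn_lim : Tendsto δn atTop (𝓝 0))
    (hratio : Tendsto (fun n => δn n / νn n) atTop (𝓝 1))
    (sol : ℕ → W × W)
    (hsol : ∀ n : ℕ,
      (sol n).2 ∈ M ∧
      (∀ φ : W, (δn n : ℂ) * p (sol n).1 φ + (νn n : ℂ) * ⟪γ₁ φ, γ₁ (sol n).1⟫ +
        (η : ℂ) ^ 2 * ⟪γ₀ φ, γ₀ (sol n).1 - f⟫ + conj (a φ (sol n).2) = 0) ∧
      (∀ ψ ∈ M, a (sol n).1 ψ - ⟪ψ, (sol n).2⟫ = ℓ ψ)) :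
    Tendsto (fun n => (sol n).1) atTop (𝓝 E) ∧
    Tendsto (fun n => (sol n).2) atTop (𝓝 (0 : W)) := by
  set e : ℕ → W := fun n => (sol n).1 - E with he
  set F : ℕ → W := fun n => (sol n).2 with hF
  have ha_sub : ∀ (n : ℕ) (v : W), v ∈ M → a (e n) v = ⟪v, F n⟫ := by
    intro n v hv
    have h1 := ha_lin (-1) E (sol n).1 v hv
    have h2 := (hsol n).2.2 v hv
    have h3 : (-1 : ℂ) • E + (sol n).1 = e n := by simp only [he]; module
    rw [h3, hE_eq v hv] at h1
    rw [h1, ← h2]; ring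
  have key : ∀ n, δn n * ‖e n‖ ^ 2 + (νn n - δn n) * ‖γ₁ (e n)‖ ^ 2
      + η ^ 2 * ‖γ₀ (e n)‖ ^ 2 + ‖F n‖ ^ 2
      = - δn n * (⟪e n, E⟫ : ℂ).re - (νn n - δn n) * (⟪γ₁ (e n), γ₁ E⟫ : ℂ).re := by
    intro n
    have h1 := (hsol n).2.1 (e n)
    have hs : (sol n).1 = e n + E := by simp [he]
    have hp : p (sol n).1 (e n) = ⟪e n, (sol n).1⟫ - ⟪γ₁ (e n), γ₁ (sol n).1⟫ := by
      rw [hp_compat]; ring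
    have h0 : γ₀ (sol n).1 - f = γ₀ (e n) := by simp [he, hE_trace]
    have h2 : a (e n) (sol n).2 = _ := ha_sub n _ (hsol n).1
    rw [hp, h0, h2, hs, map_add, inner_add_right, inner_add_right] at h1
    simp only [inner_self_eq_norm_sq_to_K, hF] at h1
    have h4 := congrArg Complex.re h1
    have hr : ∀ x : ℝ, ((x : ℂ) ^ 2) = ((x ^ 2 : ℝ) : ℂ) := by intro x; push_cast; rfl
    simp only [Complex.coe_algebraMap, hr, Complex.add_re, Complex.sub_re, Complex.re_ofReal_mul,
      Complex.conj_re, Complex.ofReal_re, Complex.zero_re, Complex.conj_ofReal] at h4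
    simp only [hF]
    linarith
  set c : ℕ → ℝ := fun n => |νn n / δn n - 1| * ‖γ₁‖ ^ 2 with hc
  have hc0 : Tendsto c atTop (𝓝 0) := by
    have h1 : Tendsto (fun n => νn n / δn n) atTop (𝓝 1) := by
      have := hratio.inv₀ one_ne_zero
      simpa using this
    have h2 := ((h1.sub_const 1).abs).mul_const (‖γ₁‖ ^ 2)
    simpa using h2
  have hcn : ∀ n, 0 ≤ c n := fun n => by positivity
  have hκ : ∀ n, |νn n - δn n| * ‖γ₁‖ ^ 2 = δn n * c n := by
    intro n
    have hd := hδn_pos n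
    have : νn n - δn n = δn n * (νn n / δn n - 1) := by field_simp
    rw [this, abs_mul, abs_of_pos hd]; simp only [hc]; ring
  have master : ∀ n, δn n * ‖e n‖ ^ 2 + η ^ 2 * ‖γ₀ (e n)‖ ^ 2 + ‖F n‖ ^ 2
      ≤ δn n * (‖(⟪e n, E⟫ : ℂ)‖ + c n * (‖E‖ * ‖e n‖) + c n * ‖e n‖ ^ 2) := by
    intro n
    have h := key n
    have b1 : -(⟪e n, E⟫ : ℂ).re ≤ ‖(⟪e n, E⟫ : ℂ)‖ :=
      (neg_le_abs _).trans (Complex.abs_re_le_norm _)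
    have g1 := γ₁.le_opNorm (e n)
    have g2 := γ₁.le_opNorm E
    have b2 : -((νn n - δn n) * (⟪γ₁ (e n), γ₁ E⟫ : ℂ).re) ≤ δn n * c n * (‖E‖ * ‖e n‖) := by
      calc _ ≤ |(νn n - δn n) * (⟪γ₁ (e n), γ₁ E⟫ : ℂ).re| := neg_le_abs _
        _ = |νn n - δn n| * |(⟪γ₁ (e n), γ₁ E⟫ : ℂ).re| := abs_mul _ _
        _ ≤ |νn n - δn n| * ((‖γ₁‖ * ‖e n‖) * (‖γ₁‖ * ‖E‖)) := by
            gcongr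
            exact (Complex.abs_re_le_norm _).trans ((norm_inner_le_norm _ _).trans (by gcongr))
        _ = (|νn n - δn n| * ‖γ₁‖ ^ 2) * (‖E‖ * ‖e n‖) := by ring
        _ = _ := by rw [hκ]
    have b3 : -((νn n - δn n) * ‖γ₁ (e n)‖ ^ 2) ≤ δn n * c n * ‖e n‖ ^ 2 := by
      calc _ ≤ |(νn n - δn n) * ‖γ₁ (e n)‖ ^ 2| := neg_le_abs _
        _ = |νn n - δn n| * ‖γ₁ (e n)‖ ^ 2 := by rw [abs_mul, abs_of_nonneg (sq_nonneg ‖γ₁ (e n)‖)]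
        _ ≤ |νn n - δn n| * (‖γ₁‖ * ‖e n‖) ^ 2 := by gcongr
        _ = (|νn n - δn n| * ‖γ₁‖ ^ 2) * ‖e n‖ ^ 2 := by ring
        _ = _ := by rw [hκ]
    have b4 := mul_le_mul_of_nonneg_left b1 (hδn_pos n).le
    linarith
  have hev : ∀ᶠ n in atTop, c n ≤ 1 / 2 :=
    (hc0.eventually_lt_const (by norm_num : (0 : ℝ) < 1 / 2)).mono fun n h => h.le
  have hsq : ∀ n, ‖e n‖ ^ 2 ≤ ‖(⟪e n, E⟫ : ℂ)‖ + c n * (‖E‖ * ‖e n‖) + c n * ‖e n‖ ^ 2 := by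
    intro n
    refine le_of_mul_le_mul_left ?_ (hδn_pos n)
    have := master n
    nlinarith [sq_nonneg (η * ‖γ₀ (e n)‖), sq_nonneg ‖F n‖]
  have hbd : ∀ᶠ n in atTop, ‖e n‖ ≤ 3 * ‖E‖ := by
    filter_upwards [hev] with n hn
    have h1 := hsq n
    have h2 : ‖(⟪e n, E⟫ : ℂ)‖ ≤ ‖e n‖ * ‖E‖ := norm_inner_le_norm _ _
    have h3 : c n * (‖E‖ * ‖e n‖) ≤ 1 / 2 * (‖E‖ * ‖e n‖) := by gcongr
    have h4 : c n * ‖e n‖ ^ 2 ≤ 1 / 2 * ‖e n‖ ^ 2 := by gcongr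
    by_contra hlt
    push Not at hlt
    have : 0 < ‖e n‖ := lt_of_le_of_lt (by positivity) hlt
    nlinarith
  have hrhs : ∀ᶠ n in atTop, η ^ 2 * ‖γ₀ (e n)‖ ^ 2 + ‖F n‖ ^ 2 ≤ δn n * (9 * ‖E‖ ^ 2) := by
    filter_upwards [hev, hbd] with n hn hb
    have h1 := master n
    have h2 : ‖(⟪e n, E⟫ : ℂ)‖ ≤ (3 * ‖E‖) * ‖E‖ := (norm_inner_le_norm _ _).trans (by gcongr)
    have h3 : c n * (‖E‖ * ‖e n‖) ≤ 1 / 2 * (‖E‖ * (3 * ‖E‖)) := by gcongr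
    have h4 : c n * ‖e n‖ ^ 2 ≤ 1 / 2 * (3 * ‖E‖) ^ 2 := by gcongr
    have h5 : ‖(⟪e n, E⟫ : ℂ)‖ + c n * (‖E‖ * ‖e n‖) + c n * ‖e n‖ ^ 2 ≤ 9 * ‖E‖ ^ 2 := by
      nlinarith [sq_nonneg ‖E‖]
    have h6 := mul_le_mul_of_nonneg_left h5 (hδn_pos n).le
    have h7 : 0 ≤ δn n * ‖e n‖ ^ 2 := mul_nonneg (hδn_pos n).le (sq_nonneg _)
    linarith
  have hr0 : Tendsto (fun n => δn n * (9 * ‖E‖ ^ 2)) atTop (𝓝 0) := by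
    simpa using hδn_lim.mul_const (9 * ‖E‖ ^ 2)
  have hF0 : Tendsto F atTop (𝓝 0) := by
    rw [tendsto_zero_iff_norm_tendsto_zero]
    have : Tendsto (fun n => ‖F n‖ ^ 2) atTop (𝓝 0) := by
      refine squeeze_zero' (Eventually.of_forall fun n => sq_nonneg _) ?_ hr0
      filter_upwards [hrhs] with n hn
      nlinarith [sq_nonneg (η * ‖γ₀ (e n)‖)]
    simpa [Real.sqrt_sq] using this.sqrt
  have hγ0 : Tendsto (fun n => γ₀ (e n)) atTop (𝓝 0) := by
    rw [tendsto_zero_iff_norm_tendsto_zero]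
    have : Tendsto (fun n => η ^ 2 * ‖γ₀ (e n)‖ ^ 2) atTop (𝓝 0) := by
      refine squeeze_zero' (Eventually.of_forall fun n => by positivity) ?_ hr0
      filter_upwards [hrhs] with n hn
      nlinarith [sq_nonneg ‖F n‖]
    have h2 := this.const_mul ((η ^ 2)⁻¹)
    have h3 : ∀ x : ℝ, (η ^ 2)⁻¹ * (η ^ 2 * x) = x := fun x => by field_simp
    simp only [h3, mul_zero] at h2
    simpa [Real.sqrt_sq] using h2.sqrt
  -- weak convergence of `e`
  let S : Submodule ℂ W :=
    { carrier := {v | Tendsto (fun n => (⟪v, e n⟫ : ℂ)) atTop (𝓝 0)}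
      add_mem' := by
        intro x y hx hy
        simp only [Set.mem_setOf_eq, inner_add_left] at *
        simpa using hx.add hy
      zero_mem' := by simp
      smul_mem' := by
        intro k x hx
        simp only [Set.mem_setOf_eq, inner_smul_left] at *
        simpa using hx.const_mul (conj k) }
  have hSmem : ∀ v, v ∈ S ↔ Tendsto (fun n => (⟪v, e n⟫ : ℂ)) atTop (𝓝 0) := fun v => Iff.rfl
  have hSclosed : IsClosed (S : Set W) := by
    refine isClosed_of_closure_subset fun v hv => ?_
    rw [SetLike.mem_coe, hSmem, Metric.tendsto_nhds]
    intro ε hε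
    have hB : 0 < 3 * ‖E‖ + 1 := by positivity
    obtain ⟨w, hw, hd⟩ := Metric.mem_closure_iff.1 hv (ε / 2 / (3 * ‖E‖ + 1)) (by positivity)
    have hw' := (Metric.tendsto_nhds.1 ((hSmem w).1 hw)) (ε / 2) (by positivity)
    filter_upwards [hw', hbd] with n h1 h2
    rw [dist_zero_right] at *
    have h3 : (⟪v, e n⟫ : ℂ) = ⟪v - w, e n⟫ + ⟪w, e n⟫ := by rw [inner_sub_left]; ring
    have h4 : ‖(⟪v - w, e n⟫ : ℂ)‖ ≤ ε / 2 := by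
      calc _ ≤ ‖v - w‖ * ‖e n‖ := norm_inner_le_norm _ _
        _ ≤ (ε / 2 / (3 * ‖E‖ + 1)) * (3 * ‖E‖ + 1) := by
            rw [dist_eq_norm] at hd
            gcongr
            linarith
        _ = ε / 2 := by field_simp
    rw [h3]
    calc _ ≤ _ := norm_add_le _ _
      _ < ε := by linarith
  have hStop : S = ⊤ := by
    have : CompleteSpace S := hSclosed.completeSpace_coe
    rw [← Submodule.orthogonal_eq_bot_iff, Submodule.eq_bot_iff]
    intro x hx
    rw [Submodule.mem_orthogonal] at hx
    have hx0 : γ₀ x = 0 := by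
      refine ext_inner_left ℂ fun g => ?_
      rw [inner_zero_right, ← ContinuousLinearMap.adjoint_inner_left]
      refine hx _ ((hSmem _).2 ?_)
      simp only [ContinuousLinearMap.adjoint_inner_left]
      simpa using (tendsto_const_nhds (x := g)).inner (𝕜 := ℂ) hγ0
    have hxa : ∀ ψ ∈ M, a x ψ = 0 := by
      intro ψ hψ
      obtain ⟨C, hC⟩ := ha_bdd
      have hz : a 0 ψ = 0 := by
        have := ha_lin 1 0 0 ψ hψ
        simpa using this
      let A : W →ₗ[ℂ] ℂ :=
        { toFun := fun u => a u ψ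
          map_add' := fun u u' => by simpa using ha_lin 1 u u' ψ hψ
          map_smul' := fun k u => by simpa [hz] using ha_lin k u 0 ψ hψ }
      let A' : W →L[ℂ] ℂ := A.mkContinuous (C * ‖ψ‖) fun u => by
        have := hC u ψ hψ
        simp only [A, LinearMap.coe_mk, AddHom.coe_mk]
        linarith
      have hA : ∀ u, (⟪(InnerProductSpace.toDual ℂ W).symm A', u⟫ : ℂ) = a u ψ := by
        intro u
        rw [InnerProductSpace.toDual_symm_apply]; rfl
      rw [← hA]
      refine hx _ ((hSmem _).2 ?_)
      simp only [hA, ha_sub _ ψ hψ]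
      simpa using (tendsto_const_nhds (x := ψ)).inner (𝕜 := ℂ) hF0
    have := hE_unique (x + E) (by simp [hx0, hE_trace]) (fun ψ hψ => by
      have := ha_lin 1 x E ψ hψ
      simpa [hxa ψ hψ, hE_eq ψ hψ] using this)
    simpa using this
  have hweak : Tendsto (fun n => ‖(⟪e n, E⟫ : ℂ)‖) atTop (𝓝 0) := by
    have h : E ∈ S := by rw [hStop]; trivial
    have := ((hSmem E).1 h).norm
    simpa [norm_inner_symm] using this
  have he0 : Tendsto e atTop (𝓝 0) := by
    rw [tendsto_zero_iff_norm_tendsto_zero]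
    have h1 : Tendsto (fun n => ‖(⟪e n, E⟫ : ℂ)‖ + c n * (12 * ‖E‖ ^ 2)) atTop (𝓝 0) := by
      simpa using hweak.add (hc0.mul_const (12 * ‖E‖ ^ 2))
    have : Tendsto (fun n => ‖e n‖ ^ 2) atTop (𝓝 0) := by
      refine squeeze_zero' (Eventually.of_forall fun n => sq_nonneg _) ?_ h1
      filter_upwards [hbd] with n hb
      have h2 := hsq n
      have hcn' := hcn n
      have h3 : c n * (‖E‖ * ‖e n‖) ≤ c n * (‖E‖ * (3 * ‖E‖)) := by gcongr
      have h4 : c n * ‖e n‖ ^ 2 ≤ c n * (3 * ‖E‖) ^ 2 := by gcongr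
      nlinarith
    simpa [Real.sqrt_sq] using this.sqrt
  refine ⟨?_, hF0⟩
  simpa [he] using he0.add_const E
end
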